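/- arXiv:2012.11565 — 2 statements merged into one kernel-verified Lean document; each statement's English description precedes it below -/
import Mathlib

section
/- There is an absolute constant C > 0 with the following property. Let w ≥ 2, let λ : ℕ → ℂ be finitely supported with λ_d = 0 unless d is squarefree with all prime factors < w, and define θ_n = Σ_{d | n} λ_d. Then Σ_{d | P(w)} d·| Σ_{m | P(w), d | m} λ_m/m |² ≤ C·∏_{p < w}(1 − 1/p)·Σ_{b | P(w)} (b/φ(b)²)·Σ_{e₁, e₂ | P(w), gcd(e₁,e₂)=1, gcd(e₁e₂, b)=1} |θ_{be₁}|·|θ_{be₂}|/(e₁·e₂·φ(e₁e₂)). -/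
open scoped Classical

/-- `d` is a squarefree positive integer all of whose prime factors are `< w`
(i.e. `d ∣ P(w)`). -/
def dividesPrimorial (w : ℝ) (d : ℕ) : Prop :=
  Squarefree d ∧ ∀ p ∈ d.primeFactors, (p : ℝ) < w

noncomputable def kk (p : ℕ) (b1 b2 : Prop) : ℝ :=
  if b1 then (if b2 then ((p:ℝ)+1)/(p:ℝ)^2 else -1/(p:ℝ)^2)
  else (if b2 then -1/(p:ℝ)^2 else ((p:ℝ)^2-p+1)/(p:ℝ)^2)

noncomputable def th (f : Finset ℕ → ℂ) (N : Finset ℕ) : ℂ := ∑ M ∈ N.powerset, f M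

noncomputable def inn (S : Finset ℕ) (f : Finset ℕ → ℂ) (D : Finset ℕ) : ℂ :=
  ∑ M ∈ S.powerset, if D ⊆ M then f M / (∏ p ∈ M, (p:ℂ)) else 0

noncomputable def LL (S : Finset ℕ) (f g : Finset ℕ → ℂ) : ℂ :=
  ∑ D ∈ S.powerset, (∏ p ∈ D, (p:ℂ)) * inn S f D * inn S g D

noncomputable def RR (S : Finset ℕ) (f g : Finset ℕ → ℂ) : ℂ :=
  ∑ N₁ ∈ S.powerset, ∑ N₂ ∈ S.powerset, th f N₁ * th g N₂ *
    ((∏ p ∈ S, kk p (p ∈ N₁) (p ∈ N₂) : ℝ) : ℂ)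

lemma th_insert (f : Finset ℕ → ℂ) {a : ℕ} {N : Finset ℕ} (h : a ∉ N) :
    th f (insert a N) = th f N + th (fun M => f (insert a M)) N := by
  unfold th; rw [Finset.sum_powerset_insert h]

lemma inn_insert0 (S : Finset ℕ) (f : Finset ℕ → ℂ) {a : ℕ} (h : a ∉ S) {D : Finset ℕ} (hD : D ⊆ S) :
    inn (insert a S) f D = inn S f D + (1/(a:ℂ)) * inn S (fun M => f (insert a M)) D := by
  unfold inn
  rw [Finset.sum_powerset_insert h, Finset.mul_sum]
  congr 1
  apply Finset.sum_congr rfl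
  intro M hM
  have hM' := Finset.mem_powerset.1 hM
  have haM : a ∉ M := fun h' => h (hM' h')
  have haD : a ∉ D := fun h' => h (hD h')
  simp only [Finset.subset_insert_iff_of_notMem haD, Finset.prod_insert haM]
  split_ifs <;> simp
  field_simp

lemma inn_insert1 (S : Finset ℕ) (f : Finset ℕ → ℂ) {a : ℕ} (h : a ∉ S) {D : Finset ℕ} (hD : D ⊆ S) :
    inn (insert a S) f (insert a D) = (1/(a:ℂ)) * inn S (fun M => f (insert a M)) D := by
  unfold inn
  rw [Finset.sum_powerset_insert h, Finset.mul_sum]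
  have haD : a ∉ D := fun h' => h (hD h')
  rw [Finset.sum_eq_zero, zero_add]
  · apply Finset.sum_congr rfl
    intro M hM
    have hM' := Finset.mem_powerset.1 hM
    have haM : a ∉ M := fun h' => h (hM' h')
    simp only [Finset.insert_subset_insert_iff haD, Finset.prod_insert haM]
    split_ifs <;> simp
    field_simp
  · intro M hM
    have hM' := Finset.mem_powerset.1 hM
    rw [if_neg]
    intro h'
    exact h (hM' (h' (Finset.mem_insert_self _ _)))

noncomputable def fin (a : ℕ) (f : Finset ℕ → ℂ) : Finset ℕ → ℂ := fun M => f (insert a M)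

lemma LL_insert (S : Finset ℕ) (f g : Finset ℕ → ℂ) {a : ℕ} (h : a ∉ S) (ha : a ≠ 0) :
    LL (insert a S) f g = LL S f g + (1/(a:ℂ)) * LL S (fin a f) g + (1/(a:ℂ)) * LL S f (fin a g)
      + (((a:ℂ)+1)/(a:ℂ)^2) * LL S (fin a f) (fin a g) := by
  have ha' : (a:ℂ) ≠ 0 := by exact_mod_cast ha
  unfold LL
  rw [Finset.sum_powerset_insert h]
  simp only [Finset.mul_sum, ← Finset.sum_add_distrib]
  apply Finset.sum_congr rfl
  intro D hD
  have hD' := Finset.mem_powerset.1 hD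
  have haD : a ∉ D := fun h' => h (hD' h')
  rw [inn_insert0 S f h hD', inn_insert0 S g h hD', inn_insert1 S f h hD', inn_insert1 S g h hD',
    Finset.prod_insert haD]
  unfold fin
  field_simp
  ring

lemma prod_kk (S : Finset ℕ) {a : ℕ} (h : a ∉ S) {N₁ N₂ A B : Finset ℕ}
    (hA : ∀ p ∈ S, p ∈ A ↔ p ∈ N₁) (hB : ∀ p ∈ S, p ∈ B ↔ p ∈ N₂) :
    (∏ p ∈ insert a S, kk p (p ∈ A) (p ∈ B)) =
      kk a (a ∈ A) (a ∈ B) * ∏ p ∈ S, kk p (p ∈ N₁) (p ∈ N₂) := by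
  rw [Finset.prod_insert h]
  congr 1
  apply Finset.prod_congr rfl
  intro p hp
  simp only [hA p hp, hB p hp]

lemma RR_insert (S : Finset ℕ) (f g : Finset ℕ → ℂ) {a : ℕ} (h : a ∉ S) (ha : a ≠ 0) :
    RR (insert a S) f g = RR S f g + (1/(a:ℂ)) * RR S (fin a f) g + (1/(a:ℂ)) * RR S f (fin a g)
      + (((a:ℂ)+1)/(a:ℂ)^2) * RR S (fin a f) (fin a g) := by
  have ha' : (a:ℂ) ≠ 0 := by exact_mod_cast ha
  unfold RR
  simp only [Finset.sum_powerset_insert h]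
  simp only [Finset.mul_sum, ← Finset.sum_add_distrib]
  apply Finset.sum_congr rfl
  intro N₁ h1
  apply Finset.sum_congr rfl
  intro N₂ h2
  have h1' := Finset.mem_powerset.1 h1
  have h2' := Finset.mem_powerset.1 h2
  have a1 : a ∉ N₁ := fun h' => h (h1' h')
  have a2 : a ∉ N₂ := fun h' => h (h2' h')
  have key : ∀ N : Finset ℕ, ∀ p ∈ S, p ∈ insert a N ↔ p ∈ N := by
    intro N p hp
    have : p ≠ a := fun h' => h (h' ▸ hp)
    simp [this]
  rw [th_insert f a1, th_insert g a2,
    prod_kk S h (N₁ := N₁) (N₂ := N₂) (A := N₁) (B := N₂) (by simp) (by simp),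
    prod_kk S h (N₁ := N₁) (N₂ := N₂) (A := insert a N₁) (B := N₂) (key _) (by simp),
    prod_kk S h (N₁ := N₁) (N₂ := N₂) (A := N₁) (B := insert a N₂) (by simp) (key _),
    prod_kk S h (N₁ := N₁) (N₂ := N₂) (A := insert a N₁) (B := insert a N₂) (key _) (key _)]
  unfold fin
  simp only [kk, a1, a2, Finset.mem_insert_self, if_true, if_false]
  push_cast
  field_simp
  ring

lemma LL_eq_RR (S : Finset ℕ) (hS : ∀ p ∈ S, p ≠ 0) : ∀ f g : Finset ℕ → ℂ, LL S f g = RR S f g := by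
  induction S using Finset.induction_on with
  | empty => intro f g; simp [LL, RR, inn, th]
  | insert a S h ih =>
    intro f g
    have ih' := ih (fun p hp => hS p (Finset.mem_insert_of_mem hp))
    have ha := hS a (Finset.mem_insert_self _ _)
    rw [LL_insert S f g h ha, RR_insert S f g h ha]
    simp only [ih']

noncomputable def rr (p : ℕ) (b1 b2 : Prop) : ℝ :=
  (if b1 ∧ b2 then (p:ℝ)/((p:ℝ)-1)^2 else 1) * (if b1 ∧ ¬ b2 then 1/((p:ℝ)*((p:ℝ)-1)) else 1) *
    (if b2 ∧ ¬ b1 then 1/((p:ℝ)*((p:ℝ)-1)) else 1)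

lemma kk_le {p : ℕ} (hp : 2 ≤ p) (b1 b2 : Prop) :
    |kk p b1 b2| ≤ (1 + 1/((p:ℝ)*((p:ℝ)-1))) * (1 - 1/(p:ℝ)) * rr p b1 b2 := by
  obtain ⟨x, hx⟩ : ∃ x : ℝ, x = (p:ℝ) - 1 := ⟨_, rfl⟩
  have hx1 : 1 ≤ x := by
    have : (2:ℝ) ≤ p := by exact_mod_cast hp
    linarith
  have hpx : (p:ℝ) = x + 1 := by linarith
  have hx0 : 0 < x := by linarith
  have e : (1 + 1/((x+1)*((x+1)-1))) * (1 - 1/(x+1)) = (x^2+x+1)/(x+1)^2 := by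
    have : x + 1 - 1 = x := by ring
    rw [this]; field_simp; ring
  unfold kk rr
  rw [hpx, e]
  have e2 : x + 1 - 1 = x := by ring
  rw [e2]
  by_cases h1 : b1 <;> by_cases h2 : b2 <;> simp only [h1, h2, if_true, if_false, and_true, and_false, not_true, not_false_iff, mul_one, one_mul, neg_div, abs_neg]
  · rw [abs_of_nonneg (by positivity), div_mul_div_comm, div_le_div_iff₀ (by positivity) (by positivity)]
    have : (x^2+x+1)*(x+1)*(x+1)^2 - (x+1+1)*((x+1)^2*x^2) = (x+1)^2*(2*x+1) := by ring
    nlinarith [show 0 ≤ (x+1)^2*(2*x+1) by positivity]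
  · rw [abs_of_nonneg (by positivity), div_mul_div_comm, div_le_div_iff₀ (by positivity) (by positivity)]
    have : (x^2+x+1)*1*(x+1)^2 - 1*((x+1)^2*((x+1)*x)) = (x+1)^2 := by ring
    nlinarith [show 0 ≤ (x+1)^2 by positivity]
  · rw [abs_of_nonneg (by positivity), div_mul_div_comm, div_le_div_iff₀ (by positivity) (by positivity)]
    have : (x^2+x+1)*1*(x+1)^2 - 1*((x+1)^2*((x+1)*x)) = (x+1)^2 := by ring
    nlinarith [show 0 ≤ (x+1)^2 by positivity]
  · have : (x+1)^2-(x+1)+1 = x^2+x+1 := by ring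
    rw [this, abs_of_nonneg (by positivity)]

lemma prod_ite_sub (S A : Finset ℕ) (q : ℕ → Prop) {_ : DecidablePred q} (u : ℕ → ℝ) (hA : A ⊆ S)
    (h : ∀ p, q p ↔ p ∈ A) : (∏ p ∈ S, if q p then u p else 1) = ∏ p ∈ A, u p := by
  rw [← Finset.prod_subset hA (f := fun p => if q p then u p else 1)]
  · exact Finset.prod_congr rfl (fun p hp => if_pos ((h p).2 hp))
  · intro p _ hp
    exact if_neg (fun h' => hp ((h p).1 h'))

lemma prod_rr (S N₁ N₂ : Finset ℕ) (h1 : N₁ ⊆ S) (h2 : N₂ ⊆ S) :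
    ∏ p ∈ S, rr p (p ∈ N₁) (p ∈ N₂) = (∏ p ∈ N₁ ∩ N₂, (p:ℝ)/((p:ℝ)-1)^2) *
      (∏ p ∈ N₁ \ N₂, 1/((p:ℝ)*((p:ℝ)-1))) * (∏ p ∈ N₂ \ N₁, 1/((p:ℝ)*((p:ℝ)-1))) := by
  unfold rr
  rw [Finset.prod_mul_distrib, Finset.prod_mul_distrib]
  refine congrArg₂ _ (congrArg₂ _ ?_ ?_) ?_
  · exact @prod_ite_sub S (N₁ ∩ N₂) (fun p => p ∈ N₁ ∧ p ∈ N₂) _ (fun p => (p:ℝ)/((p:ℝ)-1)^2)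
      (Finset.inter_subset_left.trans h1) (by simp)
  · exact @prod_ite_sub S (N₁ \ N₂) (fun p => p ∈ N₁ ∧ p ∉ N₂) _ (fun p => 1/((p:ℝ)*((p:ℝ)-1)))
      (Finset.sdiff_subset.trans h1) (by simp)
  · exact @prod_ite_sub S (N₂ \ N₁) (fun p => p ∈ N₂ ∧ p ∉ N₁) _ (fun p => 1/((p:ℝ)*((p:ℝ)-1)))
      (Finset.sdiff_subset.trans h2) (by simp)

lemma prod_c (S : Finset ℕ) (hS : ∀ p ∈ S, 2 ≤ p) :
    ∏ p ∈ S, (1 + 1/((p:ℝ)*((p:ℝ)-1))) ≤ Real.exp 1 := by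
  have hsum : ∀ n : ℕ, ∑ p ∈ Finset.range n, (if 2 ≤ p then 1/((p:ℝ)*((p:ℝ)-1)) else 0) ≤
      1 - (if 2 ≤ n then 1/((n:ℝ)-1) else 0) := by
    intro n
    induction n with
    | zero => simp
    | succ n ih =>
      rw [Finset.sum_range_succ]
      rcases Nat.lt_or_ge n 2 with h | h
      · interval_cases n <;> norm_num [Finset.sum_range_succ]
      · rw [if_pos h] at ih ⊢
        rw [if_pos (by omega)]
        have : (2:ℝ) ≤ n := by exact_mod_cast h
        have e : 1/((n:ℝ)*((n:ℝ)-1)) = 1/((n:ℝ)-1) - 1/(n:ℝ) := by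
          have : (n:ℝ) - 1 ≠ 0 := by linarith
          have : (n:ℝ) ≠ 0 := by linarith
          field_simp; ring
        push_cast
        rw [e, add_sub_cancel_right]
        linarith
  obtain ⟨n, hn⟩ : ∃ n, S ⊆ Finset.range n := ⟨_, Finset.subset_range_sup_succ S⟩
  have pos : ∀ p : ℕ, 2 ≤ p → 0 ≤ 1/((p:ℝ)*((p:ℝ)-1)) := by
    intro p hp
    have : (2:ℝ) ≤ p := by exact_mod_cast hp
    have : 0 ≤ (p:ℝ) - 1 := by linarith
    positivity
  calc ∏ p ∈ S, (1 + 1/((p:ℝ)*((p:ℝ)-1))) ≤ ∏ p ∈ S, Real.exp (1/((p:ℝ)*((p:ℝ)-1))) := by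
        apply Finset.prod_le_prod
        · intro p hp; have := pos p (hS p hp); linarith
        · intro p hp; rw [add_comm]; exact Real.add_one_le_exp _
    _ = Real.exp (∑ p ∈ S, 1/((p:ℝ)*((p:ℝ)-1))) := (Real.exp_sum _ _).symm
    _ ≤ Real.exp 1 := by
      apply Real.exp_le_exp.2
      calc ∑ p ∈ S, 1/((p:ℝ)*((p:ℝ)-1)) = ∑ p ∈ S, (if 2 ≤ p then 1/((p:ℝ)*((p:ℝ)-1)) else 0) := by
            apply Finset.sum_congr rfl
            intro p hp; rw [if_pos (hS p hp)]
        _ ≤ ∑ p ∈ Finset.range n, (if 2 ≤ p then 1/((p:ℝ)*((p:ℝ)-1)) else 0) := by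
            apply Finset.sum_le_sum_of_subset_of_nonneg hn
            intro p _ _
            split_ifs with h
            · exact pos p h
            · exact le_rfl
        _ ≤ _ := hsum n
        _ ≤ 1 := by
            split_ifs with h
            · have : (2:ℝ) ≤ n := by exact_mod_cast h
              have : 0 ≤ 1/((n:ℝ)-1) := by
                apply div_nonneg <;> linarith
              linarith
            · simp

noncomputable def Sw (w : ℝ) : Finset ℕ := (Finset.range ⌈w⌉₊).filter Nat.Prime

lemma mem_Sw (w : ℝ) (p : ℕ) : p ∈ Sw w ↔ (p:ℝ) < w ∧ p.Prime := by
  simp [Sw, Nat.lt_ceil]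

/-- product of a set of naturals -/
def pr (A : Finset ℕ) : ℕ := ∏ p ∈ A, p

lemma sqf_pr {A : Finset ℕ} (hA : ∀ p ∈ A, p.Prime) : Squarefree (pr A) := by
  induction A using Finset.induction_on with
  | empty => simp [pr]
  | insert a A h ih =>
    have hA' := fun p hp => hA p (Finset.mem_insert_of_mem hp)
    have ha := hA a (Finset.mem_insert_self _ _)
    unfold pr at *
    rw [Finset.prod_insert h, Nat.squarefree_mul]
    · exact ⟨ha.squarefree, ih hA'⟩
    · apply Nat.Coprime.prod_right
      intro p hp
      exact (Nat.coprime_primes ha (hA' p hp)).2 (fun e => h (e ▸ hp))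

lemma pf_pr {A : Finset ℕ} (hA : ∀ p ∈ A, p.Prime) : (pr A).primeFactors = A :=
  Nat.primeFactors_prod hA

lemma dP_pr {w : ℝ} {A : Finset ℕ} (hA : A ⊆ Sw w) : dividesPrimorial w (pr A) := by
  have h : ∀ p ∈ A, p.Prime := fun p hp => ((mem_Sw w p).1 (hA hp)).2
  refine ⟨sqf_pr h, ?_⟩
  rw [pf_pr h]
  exact fun p hp => ((mem_Sw w p).1 (hA hp)).1

lemma prime_of_sub {w : ℝ} {A : Finset ℕ} (hA : A ⊆ Sw w) : ∀ p ∈ A, p.Prime :=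
  fun p hp => ((mem_Sw w p).1 (hA hp)).2

lemma pr_inj (w : ℝ) : Set.InjOn pr ((Sw w).powerset : Set (Finset ℕ)) := by
  intro A hA B hB h
  have hA' := Finset.mem_powerset.1 (Finset.mem_coe.1 hA)
  have hB' := Finset.mem_powerset.1 (Finset.mem_coe.1 hB)
  rw [← pf_pr (prime_of_sub hA'), ← pf_pr (prime_of_sub hB'), h]

lemma dP_sub {w : ℝ} {d : ℕ} (h : dividesPrimorial w d) :
    d.primeFactors ⊆ Sw w ∧ pr d.primeFactors = d :=
  ⟨fun p hp => (mem_Sw w p).2 ⟨h.2 p hp, Nat.prime_of_mem_primeFactors hp⟩,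
    Nat.prod_primeFactors_of_squarefree h.1⟩

lemma tsum_dP {E : Type*} [AddCommMonoid E] [TopologicalSpace E] [T2Space E] (w : ℝ) (F : ℕ → E)
    (hF : ∀ d, ¬ dividesPrimorial w d → F d = 0) :
    ∑' d, F d = ∑ A ∈ (Sw w).powerset, F (pr A) := by
  rw [tsum_eq_sum (s := (Sw w).powerset.image pr), Finset.sum_image (pr_inj w)]
  intro d hd
  apply hF
  intro h
  apply hd
  rw [Finset.mem_image]
  exact ⟨_, Finset.mem_powerset.2 (dP_sub h).1, (dP_sub h).2⟩

lemma pr_dvd {A B : Finset ℕ} (hA : ∀ p ∈ A, p.Prime) (hB : ∀ p ∈ B, p.Prime) :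
    pr A ∣ pr B ↔ A ⊆ B := by
  constructor
  · intro h
    have := Nat.primeFactors_mono h (sqf_pr hB).ne_zero
    rwa [pf_pr hA, pf_pr hB] at this
  · exact fun h => Finset.prod_dvd_prod_of_subset _ _ _ h

lemma sum_div_pr (lam : ℕ → ℂ) {N : Finset ℕ} (hN : ∀ p ∈ N, p.Prime) :
    ∑ d ∈ (pr N).divisors, lam d = th (fun A => lam (pr A)) N := by
  unfold th
  have hne := (sqf_pr hN).ne_zero
  have : (pr N).divisors = N.powerset.image pr := by
    ext d
    simp only [Nat.mem_divisors, Finset.mem_image, Finset.mem_powerset]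
    constructor
    · rintro ⟨h, _⟩
      refine ⟨d.primeFactors, ?_, Nat.prod_primeFactors_of_squarefree ((sqf_pr hN).squarefree_of_dvd h)⟩
      have := Nat.primeFactors_mono h hne
      rwa [pf_pr hN] at this
    · rintro ⟨A, hA, rfl⟩
      exact ⟨Finset.prod_dvd_prod_of_subset _ _ _ hA, hne⟩
  rw [this, Finset.sum_image]
  intro A hA B hB h
  have hA' := Finset.mem_powerset.1 (Finset.mem_coe.1 hA)
  have hB' := Finset.mem_powerset.1 (Finset.mem_coe.1 hB)
  rw [← pf_pr (fun p hp => hN p (hA' hp)), ← pf_pr (fun p hp => hN p (hB' hp)), h]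

lemma pr_union {A B : Finset ℕ} (h : Disjoint A B) : pr A * pr B = pr (A ∪ B) :=
  (Finset.prod_union h).symm

lemma cop_pr {A B : Finset ℕ} (hA : ∀ p ∈ A, p.Prime) (hB : ∀ p ∈ B, p.Prime) (h : Disjoint A B) :
    Nat.gcd (pr A) (pr B) = 1 := by
  apply Nat.Coprime.prod_left
  intro p hp
  apply Nat.Coprime.prod_right
  intro q hq
  exact (Nat.coprime_primes (hA p hp) (hB q hq)).2
    (fun e => Finset.disjoint_left.1 h hp (e ▸ hq))

lemma tot_pr {A : Finset ℕ} (hA : ∀ p ∈ A, p.Prime) :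
    (Nat.totient (pr A) : ℝ) = ∏ p ∈ A, ((p:ℝ) - 1) := by
  induction A using Finset.induction_on with
  | empty => simp [pr]
  | insert a A h ih =>
    have hA' := fun p hp => hA p (Finset.mem_insert_of_mem hp)
    have ha := hA a (Finset.mem_insert_self _ _)
    have e : pr (insert a A) = a * pr A := Finset.prod_insert h
    have c : Nat.Coprime a (pr A) := by
      apply Nat.Coprime.prod_right
      intro p hp
      exact (Nat.coprime_primes ha (hA' p hp)).2 (fun e => h (e ▸ hp))
    rw [e, Nat.totient_mul c, Nat.totient_prime ha, Finset.prod_insert h, Nat.cast_mul, ih hA',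
      Nat.cast_sub ha.one_le, Nat.cast_one]

/-- summand of the right side -/
noncomputable def HH (w : ℝ) (lam : ℕ → ℂ) (b e₁ e₂ : ℕ) : ℝ :=
  (if dividesPrimorial w e₁ ∧ dividesPrimorial w e₂ ∧
                  Nat.gcd e₁ e₂ = 1 ∧ Nat.gcd (e₁ * e₂) b = 1 then
                ‖∑ d ∈ (b * e₁).divisors, lam d‖ * ‖∑ d ∈ (b * e₂).divisors, lam d‖ /
                  ((e₁ : ℝ) * e₂ * Nat.totient (e₁ * e₂))
              else 0)

lemma HH_nonneg (w : ℝ) (lam : ℕ → ℂ) (b e₁ e₂ : ℕ) : 0 ≤ HH w lam b e₁ e₂ := by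
  unfold HH
  split_ifs
  · positivity
  · exact le_rfl

lemma HH_eq (w : ℝ) (lam : ℕ → ℂ) {N₁ N₂ : Finset ℕ} (h1 : N₁ ⊆ Sw w) (h2 : N₂ ⊆ Sw w) :
    ((pr (N₁ ∩ N₂) : ℕ) : ℝ) / (Nat.totient (pr (N₁ ∩ N₂)) : ℝ) ^ 2 *
      HH w lam (pr (N₁ ∩ N₂)) (pr (N₁ \ N₂)) (pr (N₂ \ N₁)) =
    ‖th (fun A => lam (pr A)) N₁‖ * ‖th (fun A => lam (pr A)) N₂‖ *
      ∏ p ∈ Sw w, rr p (p ∈ N₁) (p ∈ N₂) := by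
  have sB : N₁ ∩ N₂ ⊆ Sw w := Finset.inter_subset_left.trans h1
  have s1 : N₁ \ N₂ ⊆ Sw w := Finset.sdiff_subset.trans h1
  have s2 : N₂ \ N₁ ⊆ Sw w := Finset.sdiff_subset.trans h2
  have d12 : Disjoint (N₁ \ N₂) (N₂ \ N₁) := disjoint_sdiff_sdiff
  have dB1 : Disjoint (N₁ ∩ N₂) (N₁ \ N₂) := by
    rw [Finset.disjoint_left]; intro p; simp; tauto
  have dB2 : Disjoint (N₁ ∩ N₂) (N₂ \ N₁) := by
    rw [Finset.disjoint_left]; intro p; simp; tauto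
  have u1 : N₁ ∩ N₂ ∪ N₁ \ N₂ = N₁ := by ext p; simp; tauto
  have u2 : N₁ ∩ N₂ ∪ N₂ \ N₁ = N₂ := by ext p; simp; tauto
  have su := Finset.union_subset s1 s2
  unfold HH
  rw [if_pos, pr_union dB1, pr_union dB2, pr_union d12, u1, u2, sum_div_pr lam (prime_of_sub h1),
    sum_div_pr lam (prime_of_sub h2), tot_pr (prime_of_sub sB), tot_pr (prime_of_sub su),
    prod_rr _ _ _ h1 h2, Finset.prod_union d12]
  · simp only [pr, Nat.cast_prod, Finset.prod_div_distrib, Finset.prod_mul_distrib,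
      Finset.prod_pow, Finset.prod_const_one]
    simp only [div_eq_mul_inv, mul_inv]
    ring
  · refine ⟨dP_pr s1, dP_pr s2, cop_pr (prime_of_sub s1) (prime_of_sub s2) d12, ?_⟩
    rw [pr_union d12]
    apply cop_pr (prime_of_sub su) (prime_of_sub sB)
    exact (Finset.disjoint_union_left.2 ⟨dB1.symm, dB2.symm⟩)

lemma rhs_ge (S : Finset ℕ) (G : Finset ℕ → Finset ℕ → ℝ) (H : Finset ℕ → Finset ℕ → Finset ℕ → ℝ)
    (hH : ∀ B E₁ E₂, 0 ≤ H B E₁ E₂)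
    (hG : ∀ N₁ ⊆ S, ∀ N₂ ⊆ S, G N₁ N₂ = H (N₁ ∩ N₂) (N₁ \ N₂) (N₂ \ N₁)) :
    ∑ N₁ ∈ S.powerset, ∑ N₂ ∈ S.powerset, G N₁ N₂ ≤
      ∑ B ∈ S.powerset, ∑ E₁ ∈ S.powerset, ∑ E₂ ∈ S.powerset, H B E₁ E₂ := by
  let i : Finset ℕ × Finset ℕ → Finset ℕ × Finset ℕ × Finset ℕ :=
    fun x => (x.1 ∩ x.2, x.1 \ x.2, x.2 \ x.1)
  have inj : Function.Injective i := by
    rintro ⟨a, b⟩ ⟨c, d⟩ h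
    simp only [i, Prod.mk.injEq] at h
    obtain ⟨h1, h2, h3⟩ := h
    have ea : ∀ x y : Finset ℕ, x = (x ∩ y) ∪ (x \ y) := by intro x y; ext p; simp; tauto
    have eb : ∀ x y : Finset ℕ, y = (x ∩ y) ∪ (y \ x) := by intro x y; ext p; simp; tauto
    have e1 : a = c := by rw [ea a b, h1, h2, ← ea c d]
    have e2 : b = d := by rw [eb a b, h1, h3, ← eb c d]
    rw [e1, e2]
  simp only [← Finset.sum_product']
  calc ∑ x ∈ S.powerset ×ˢ S.powerset, G x.1 x.2
      = ∑ x ∈ S.powerset ×ˢ S.powerset, (fun y => H y.1 y.2.1 y.2.2) (i x) := by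
        apply Finset.sum_congr rfl
        rintro ⟨a, b⟩ hx
        rw [Finset.mem_product, Finset.mem_powerset, Finset.mem_powerset] at hx
        exact hG a hx.1 b hx.2
    _ = ∑ y ∈ (S.powerset ×ˢ S.powerset).image i, H y.1 y.2.1 y.2.2 :=
        (Finset.sum_image (f := fun y => H y.1 y.2.1 y.2.2) (fun _ _ _ _ h => inj h)).symm
    _ ≤ ∑ y ∈ S.powerset ×ˢ (S.powerset ×ˢ S.powerset), H y.1 y.2.1 y.2.2 := by
        apply Finset.sum_le_sum_of_subset_of_nonneg
        · intro y hy
          obtain ⟨⟨a, b⟩, hx, rfl⟩ := Finset.mem_image.1 hy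
          simp only [Finset.mem_product, Finset.mem_powerset, i] at hx ⊢
          exact ⟨Finset.inter_subset_left.trans hx.1, Finset.sdiff_subset.trans hx.1,
            Finset.sdiff_subset.trans hx.2⟩
        · intro y _ _; exact hH _ _ _
    _ = _ := by
        simp only [Finset.sum_product]

lemma lhs_eq (w : ℝ) (lam : ℕ → ℂ) :
    (((∑' d : ℕ, if dividesPrimorial w d then
          (d : ℝ) * ‖∑' m : ℕ, if dividesPrimorial w m ∧ d ∣ m then lam m / m else 0‖ ^ 2
        else 0) : ℝ) : ℂ) =
    LL (Sw w) (fun A => lam (pr A)) (fun A => starRingEnd ℂ (lam (pr A))) := by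
  rw [tsum_dP w _ (fun d hd => if_neg hd)]
  unfold LL
  push_cast
  apply Finset.sum_congr rfl
  intro D hD
  have hD' := Finset.mem_powerset.1 hD
  rw [if_pos (dP_pr hD')]
  have e : (∑' m : ℕ, if dividesPrimorial w m ∧ pr D ∣ m then lam m / m else 0) =
      inn (Sw w) (fun A => lam (pr A)) D := by
    rw [tsum_dP w _ (fun d hd => if_neg (fun h => hd h.1))]
    unfold inn
    apply Finset.sum_congr rfl
    intro M hM
    have hM' := Finset.mem_powerset.1 hM
    simp only [dP_pr hM', true_and, pr_dvd (prime_of_sub hD') (prime_of_sub hM')]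
    congr 1
    simp [pr]
  have e2 : inn (Sw w) (fun A => starRingEnd ℂ (lam (pr A))) D =
      starRingEnd ℂ (inn (Sw w) (fun A => lam (pr A)) D) := by
    unfold inn
    rw [map_sum]
    apply Finset.sum_congr rfl
    intro M hM
    split_ifs <;> simp [map_div₀, map_prod]
  rw [e, e2, mul_assoc, Complex.mul_conj, Complex.normSq_eq_norm_sq]
  push_cast [pr]
  rfl

/-- Corrected form of Lemma 6.18 of Friedlander–Iwaniec, Opera de Cribro: for `w ≥ 2`
and finitely supported `λ : ℕ → ℂ` supported on squarefree integers with all prime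
factors `< w`, writing `θ_n = Σ_{d ∣ n} λ_d`,
`Σ_{d ∣ P(w)} d·|Σ_{m ∣ P(w), d ∣ m} λ_m/m|² ≤ C·Π_{p<w}(1 − 1/p)·
  Σ_{b ∣ P(w)} (b/φ(b)²)·Σ_{e₁,e₂ ∣ P(w), (e₁,e₂)=1, (e₁e₂,b)=1}
    |θ_{be₁}|·|θ_{be₂}|/(e₁e₂φ(e₁e₂))`. -/
theorem mean_square_sieve_weight_corrected_lemma :
    ∃ C : ℝ, 0 < C ∧ ∀ w : ℝ, 2 ≤ w → ∀ lam : ℕ → ℂ,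
      (Function.support lam).Finite →
      (∀ d : ℕ, lam d ≠ 0 → dividesPrimorial w d) →
      (∑' d : ℕ, if dividesPrimorial w d then
          (d : ℝ) * ‖∑' m : ℕ, if dividesPrimorial w m ∧ d ∣ m then lam m / m else 0‖ ^ 2
        else 0) ≤
      C * (∏ p ∈ (Finset.range ⌈w⌉₊).filter Nat.Prime, (1 - 1 / (p : ℝ))) *
        ∑' b : ℕ, (if dividesPrimorial w b then
          (b : ℝ) / (Nat.totient b : ℝ) ^ 2 *
            ∑' e₁ : ℕ, ∑' e₂ : ℕ,
              (if dividesPrimorial w e₁ ∧ dividesPrimorial w e₂ ∧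
                  Nat.gcd e₁ e₂ = 1 ∧ Nat.gcd (e₁ * e₂) b = 1 then
                ‖∑ d ∈ (b * e₁).divisors, lam d‖ * ‖∑ d ∈ (b * e₂).divisors, lam d‖ /
                  ((e₁ : ℝ) * e₂ * Nat.totient (e₁ * e₂))
              else 0)
        else 0) := by
  refine ⟨Real.exp 1, Real.exp_pos _, ?_⟩
  intro w _ lam _ _
  set V := ∏ p ∈ (Finset.range ⌈w⌉₊).filter Nat.Prime, (1 - 1 / (p : ℝ)) with hV
  have h2 : ∀ p ∈ Sw w, 2 ≤ p := fun p hp => ((mem_Sw w p).1 hp).2.two_le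
  have hV0 : 0 ≤ V := by
    apply Finset.prod_nonneg
    intro p hp
    have : (2:ℝ) ≤ p := by exact_mod_cast h2 p hp
    rw [sub_nonneg, div_le_one (by linarith)]
    linarith
  -- the right-hand side as a finite sum
  have hR : (∑' b : ℕ, (if dividesPrimorial w b then
          (b : ℝ) / (Nat.totient b : ℝ) ^ 2 * ∑' e₁ : ℕ, ∑' e₂ : ℕ, HH w lam b e₁ e₂ else 0)) =
      ∑ B ∈ (Sw w).powerset, ∑ E₁ ∈ (Sw w).powerset, ∑ E₂ ∈ (Sw w).powerset,
        ((pr B : ℕ) : ℝ) / (Nat.totient (pr B) : ℝ) ^ 2 * HH w lam (pr B) (pr E₁) (pr E₂) := by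
    rw [tsum_dP w _ (fun d hd => if_neg hd)]
    apply Finset.sum_congr rfl
    intro B hB
    rw [if_pos (dP_pr (Finset.mem_powerset.1 hB)), tsum_dP w, Finset.mul_sum]
    · apply Finset.sum_congr rfl
      intro E hE
      rw [tsum_dP w, Finset.mul_sum]
      intro d hd
      exact if_neg (fun h => hd h.2.1)
    · intro d hd
      have : ∀ e₂, HH w lam (pr B) d e₂ = 0 := fun e₂ => if_neg (fun h => hd h.1)
      simp [this]
  change _ ≤ Real.exp 1 * V * (∑' b : ℕ, (if dividesPrimorial w b then
          (b : ℝ) / (Nat.totient b : ℝ) ^ 2 * ∑' e₁ : ℕ, ∑' e₂ : ℕ, HH w lam b e₁ e₂ else 0))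
  rw [hR]
  have hge := rhs_ge (Sw w)
    (fun N₁ N₂ => ‖th (fun A => lam (pr A)) N₁‖ * ‖th (fun A => lam (pr A)) N₂‖ *
      ∏ p ∈ Sw w, rr p (p ∈ N₁) (p ∈ N₂))
    (fun B E₁ E₂ => ((pr B : ℕ) : ℝ) / (Nat.totient (pr B) : ℝ) ^ 2 *
      HH w lam (pr B) (pr E₁) (pr E₂))
    (fun B E₁ E₂ => mul_nonneg (by positivity) (HH_nonneg _ _ _ _ _))
    (fun N₁ h1 N₂ h2 => (HH_eq w lam h1 h2).symm)
  refine le_trans ?_ (mul_le_mul_of_nonneg_left hge (mul_nonneg (Real.exp_pos _).le hV0))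
  have hL := lhs_eq w lam
  rw [LL_eq_RR (Sw w) (fun p hp => by have := h2 p hp; omega)] at hL
  refine le_trans (le_abs_self _) ?_
  rw [← Real.norm_eq_abs, ← Complex.norm_real, hL]
  unfold RR
  simp only [Finset.mul_sum]
  refine (norm_sum_le _ _).trans (Finset.sum_le_sum fun N₁ h1 => ?_)
  refine (norm_sum_le _ _).trans (Finset.sum_le_sum fun N₂ h2' => ?_)
  have hth : th (fun A => starRingEnd ℂ (lam (pr A))) N₂ =
      starRingEnd ℂ (th (fun A => lam (pr A)) N₂) := by
    unfold th; rw [map_sum]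
  rw [norm_mul, norm_mul, hth, RCLike.norm_conj, Complex.norm_real, Real.norm_eq_abs,
    Finset.abs_prod]
  have hrr : ∀ p ∈ Sw w, 0 ≤ rr p (p ∈ N₁) (p ∈ N₂) := by
    intro p hp
    have : (2:ℝ) ≤ p := by exact_mod_cast h2 p hp
    have : 0 ≤ (p:ℝ) - 1 := by linarith
    unfold rr
    split_ifs <;> positivity
  have hk : ∏ p ∈ Sw w, |kk p (p ∈ N₁) (p ∈ N₂)| ≤
      Real.exp 1 * V * ∏ p ∈ Sw w, rr p (p ∈ N₁) (p ∈ N₂) := by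
    calc _ ≤ ∏ p ∈ Sw w, ((1 + 1/((p:ℝ)*((p:ℝ)-1))) * (1 - 1/(p:ℝ)) * rr p (p ∈ N₁) (p ∈ N₂)) :=
          Finset.prod_le_prod (fun _ _ => abs_nonneg _) (fun p hp => kk_le (h2 p hp) _ _)
      _ = (∏ p ∈ Sw w, (1 + 1/((p:ℝ)*((p:ℝ)-1)))) * V * ∏ p ∈ Sw w, rr p (p ∈ N₁) (p ∈ N₂) := by
          rw [Finset.prod_mul_distrib, Finset.prod_mul_distrib]; rfl
      _ ≤ _ := by
          apply mul_le_mul_of_nonneg_right _ (Finset.prod_nonneg hrr)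
          exact mul_le_mul_of_nonneg_right (prod_c _ h2) hV0
  calc _ ≤ ‖th (fun A => lam (pr A)) N₁‖ * ‖th (fun A => lam (pr A)) N₂‖ *
        (Real.exp 1 * V * ∏ p ∈ Sw w, rr p (p ∈ N₁) (p ∈ N₂)) :=
        mul_le_mul_of_nonneg_left hk (by positivity)
    _ = _ := by ring
end

section
/- Fix δ ∈ (0, 1/30000]. There is a constant C(δ) such that for all X ≥ 2, setting w = X^δ and E = X^{1/1000}, the β-sieve weights ρ_e^± with β = 30 and level E satisfy Σ_{d | P(w)} d·( Σ_{m | P(w), d | m} ρ_m^±/m )² ≤ C(δ)/log X, for both choices of sign. -/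
open scoped Classical

/-- Generic (β-)sieve weight: for squarefree `d = p₁⋯p_r` with primes
`lo ≤ p_r < ⋯ < p₁ < hi` satisfying `p₁⋯p_m·p_m^β < lvl` for all `m ≤ r` of the
prescribed parity (odd if `useOdd`, even otherwise), the weight is `μ(d)`;
otherwise it is `0` (and `1` gets weight `μ(1) = 1`). -/
noncomputable def sieveWeight (lo hi lvl : ℝ) (β : ℕ) (useOdd : Bool) (d : ℕ) : ℝ :=
  if Squarefree d ∧ (∀ p ∈ d.primeFactors, lo ≤ (p : ℝ) ∧ (p : ℝ) < hi) ∧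
      (∀ m : ℕ, 1 ≤ m → m ≤ d.primeFactorsList.length →
        (if useOdd then Odd m else Even m) →
        (((d.primeFactorsList.reverse.take m).prod : ℕ) : ℝ) *
          ((d.primeFactorsList.reverse.getD (m - 1) 1 : ℕ) : ℝ) ^ β < lvl)
  then (ArithmeticFunction.moebius d : ℝ) else 0

namespace BetaSieveMS

open Finset

lemma sum_log_div_le (n : ℕ) (hn : 1 ≤ n) :
    ∑ p ∈ n.primesBelow, Real.log p / p ≤ Real.log n + Real.log 4 := by
  have hn0 : (0 : ℝ) < n := by exact_mod_cast hn
  have hmem : ∀ p ∈ n.primesBelow, p.Prime ∧ p < n := by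
    intro p hp
    exact ⟨Nat.prime_of_mem_primesBelow hp, Nat.lt_of_mem_primesBelow hp⟩
  -- log n! bound
  have h1 : ∑ m ∈ Ioc 0 n, ∑ p ∈ n.primesBelow, (if p ∣ m then Real.log p else 0)
      ≤ n * Real.log n := by
    have : ∀ m ∈ Ioc 0 n, ∑ p ∈ n.primesBelow, (if p ∣ m then Real.log p else 0)
        ≤ Real.log n := by
      intro m hm
      rw [mem_Ioc] at hm
      rw [← sum_filter]
      have hsub : n.primesBelow.filter (fun p => p ∣ m) ⊆ m.primeFactors := by
        intro p hp
        rw [mem_filter] at hp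
        exact Nat.mem_primeFactors.2 ⟨(hmem p hp.1).1, hp.2, by omega⟩
      calc _ ≤ ∑ p ∈ m.primeFactors, Real.log p := by
            apply sum_le_sum_of_subset_of_nonneg hsub
            intro p hp _
            exact Real.log_natCast_nonneg p
        _ = Real.log ((∏ p ∈ m.primeFactors, p : ℕ) : ℝ) := by
            rw [Nat.cast_prod, Real.log_prod]
            intro p hp
            exact_mod_cast (Nat.prime_of_mem_primeFactors hp).ne_zero
        _ ≤ Real.log n := by
            apply Real.log_le_log
            · exact_mod_cast Finset.prod_pos (fun p hp => (Nat.prime_of_mem_primeFactors hp).pos)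
            · exact_mod_cast (Nat.le_of_dvd hm.1 (Nat.prod_primeFactors_dvd m)).trans hm.2
    calc _ ≤ ∑ m ∈ Ioc 0 n, Real.log n := sum_le_sum this
      _ = _ := by simp
  rw [sum_comm] at h1
  have h2 : ∀ p ∈ n.primesBelow, Real.log p * ((n : ℝ) / p - 1) ≤
      ∑ m ∈ Ioc 0 n, (if p ∣ m then Real.log p else 0) := by
    intro p hp
    rw [← sum_filter, sum_const, Nat.Ioc_filter_dvd_card_eq_div, nsmul_eq_mul, mul_comm]
    apply mul_le_mul_of_nonneg_right _ (Real.log_natCast_nonneg p)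
    have := Nat.lt_floor_add_one ((n : ℝ) / p)
    rw [Nat.floor_div_eq_div] at this
    linarith
  have h3 := (sum_le_sum h2).trans h1
  have h4 : ∑ p ∈ n.primesBelow, Real.log p ≤ Real.log 4 * n := by
    refine le_trans ?_ (Chebyshev.theta_le_log4_mul_x hn0.le)
    rw [Chebyshev.theta_eq_sum_Icc]
    apply sum_le_sum_of_subset_of_nonneg
    · intro p hp
      have := hmem p hp
      simp [this.1, this.2.le]
    · intro p _ _
      exact Real.log_natCast_nonneg p
  have h5 : ∑ p ∈ n.primesBelow, Real.log p * ((n : ℝ) / p - 1)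
      = n * ∑ p ∈ n.primesBelow, Real.log p / p - ∑ p ∈ n.primesBelow, Real.log p := by
    rw [mul_sum, ← sum_sub_distrib]
    apply sum_congr rfl
    intro p _
    ring
  rw [h5] at h3
  have : n * ∑ p ∈ n.primesBelow, Real.log p / p ≤ n * (Real.log n + Real.log 4) := by
    linarith
  exact le_of_mul_le_mul_left this hn0

lemma sum_inv_le (N k : ℕ) : ∀ y : ℕ, 2 ≤ y → N ≤ y ^ (2 ^ k) →
    ∑ q ∈ N.primesBelow with y ≤ q, (1 : ℝ) / q ≤ 2 * k + 2 * Real.log 4 / Real.log y := by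
  induction k with
  | zero =>
    intro y hy hN
    have : (N.primesBelow.filter (fun q => y ≤ q)) = ∅ := by
      apply filter_eq_empty_iff.2
      intro q hq
      have := Nat.lt_of_mem_primesBelow hq
      simp at hN
      omega
    rw [this]
    have := Real.log_natCast_nonneg y
    have : 0 ≤ Real.log 4 := Real.log_nonneg (by norm_num)
    simp
    positivity
  | succ k ih =>
    intro y hy hN
    have hy0 : (0 : ℝ) < Real.log y := Real.log_pos (by exact_mod_cast hy)
    have hsub : N.primesBelow.filter (fun q => y ≤ q) ⊆
        ((y ^ 2).primesBelow.filter (fun q => y ≤ q)) ∪ (N.primesBelow.filter (fun q => y ^ 2 ≤ q)) := by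
      intro q hq
      simp only [mem_union, mem_filter, Nat.mem_primesBelow] at hq ⊢
      by_cases h : y ^ 2 ≤ q
      · right; exact ⟨hq.1, h⟩
      · left; exact ⟨⟨by omega, hq.1.2⟩, hq.2⟩
    have hb := ih (y ^ 2) (by nlinarith) (by rw [← pow_mul]; convert hN using 2; ring)
    have ha : ∑ q ∈ (y ^ 2).primesBelow with y ≤ q, (1 : ℝ) / q ≤ 2 + Real.log 4 / Real.log y := by
      have h1 : ∑ q ∈ (y ^ 2).primesBelow with y ≤ q, (1 : ℝ) / q ≤
          ∑ q ∈ (y ^ 2).primesBelow, (Real.log q / q) / Real.log y := by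
        calc _ ≤ ∑ q ∈ (y ^ 2).primesBelow with y ≤ q, (Real.log q / q) / Real.log y := by
              apply sum_le_sum
              intro q hq
              rw [mem_filter] at hq
              have hq0 : (0 : ℝ) < q := by exact_mod_cast (by omega : 0 < q)
              have : Real.log y ≤ Real.log q :=
                Real.log_le_log (by positivity) (by exact_mod_cast hq.2)
              rw [div_div, div_le_div_iff₀ hq0 (by positivity)]
              nlinarith
          _ ≤ _ := by
              apply sum_le_sum_of_subset_of_nonneg (filter_subset _ _)
              intro q _ _
              have := Real.log_natCast_nonneg q
              positivity
      rw [← sum_div] at h1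
      refine h1.trans ?_
      rw [div_le_iff₀ hy0]
      have := sum_log_div_le (y ^ 2) (by nlinarith)
      push_cast at this
      rw [Real.log_pow] at this
      field_simp
      push_cast at this
      linarith
    calc _ ≤ ∑ q ∈ ((y ^ 2).primesBelow.filter (fun q => y ≤ q)) ∪
            (N.primesBelow.filter (fun q => y ^ 2 ≤ q)), (1 : ℝ) / q := by
          apply sum_le_sum_of_subset_of_nonneg hsub
          intro q _ _; positivity
      _ ≤ ∑ q ∈ (y ^ 2).primesBelow with y ≤ q, (1 : ℝ) / q +
          ∑ q ∈ N.primesBelow with y ^ 2 ≤ q, (1 : ℝ) / q := by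
          rw [← sum_union_inter]
          have : 0 ≤ ∑ q ∈ ((y ^ 2).primesBelow.filter (fun q => y ≤ q)) ∩
            (N.primesBelow.filter (fun q => y ^ 2 ≤ q)), (1 : ℝ) / q :=
            sum_nonneg (fun q _ => by positivity)
          linarith
      _ ≤ _ := by
          push_cast at hb ⊢
          rw [Real.log_pow] at hb
          push_cast at hb
          have e : 2 * Real.log 4 / (2 * Real.log y) = Real.log 4 / Real.log y := by
            field_simp
          rw [e] at hb
          have e2 : 2 * Real.log 4 / Real.log y = Real.log 4 / Real.log y + Real.log 4 / Real.log y := by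
            ring
          rw [e2]
          linarith

lemma sum_inv_sq_bound : ∃ S : ℝ, 0 ≤ S ∧ ∀ s : Finset ℕ, ∑ q ∈ s, (1 : ℝ) / (q : ℝ) ^ 2 ≤ S := by
  have hs : Summable (fun n : ℕ => (1 : ℝ) / (n : ℝ) ^ 2) :=
    Real.summable_one_div_nat_pow.2 (by norm_num)
  refine ⟨∑' n : ℕ, (1 : ℝ) / (n : ℝ) ^ 2, tsum_nonneg (fun n => by positivity), fun s => ?_⟩
  exact hs.sum_le_tsum s (fun n _ => by positivity)

lemma log_ceil_le {z : ℝ} (hz : 2 ≤ z) : Real.log (⌈z⌉₊ : ℝ) ≤ 2 * Real.log z := by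
  have h1 := Nat.ceil_lt_add_one (by linarith : 0 ≤ z)
  have h2 : 0 < (⌈z⌉₊ : ℝ) := by linarith [Nat.le_ceil z]
  calc Real.log (⌈z⌉₊ : ℝ) ≤ Real.log (z ^ 2) := Real.log_le_log h2 (by nlinarith)
    _ = _ := by rw [Real.log_pow]; norm_num

/-- (I3) -/
lemma sum_u_div_le {z : ℝ} (hz : 2 ≤ z) :
    ∑ p ∈ (⌈z⌉₊).primesBelow, (Real.log p / Real.log z) / p ≤ 4 := by
  have hl : 0 < Real.log z := Real.log_pos (by linarith)
  have h := sum_log_div_le ⌈z⌉₊ (Nat.ceil_pos.2 (by linarith))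
  have h1 := log_ceil_le hz
  have h2 : Real.log 4 ≤ 2 * Real.log z := by
    have : Real.log 4 = 2 * Real.log 2 := by
      rw [show (4 : ℝ) = 2 ^ 2 by norm_num, Real.log_pow]; norm_num
    rw [this]
    have := Real.log_le_log (by norm_num) hz
    linarith
  have e : ∑ p ∈ (⌈z⌉₊).primesBelow, (Real.log p / Real.log z) / p =
      (∑ p ∈ (⌈z⌉₊).primesBelow, Real.log p / p) / Real.log z := by
    rw [sum_div]
    exact sum_congr rfl (fun p _ => by ring)
  rw [e, div_le_iff₀ hl]
  linarith

/-- (I2) -/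
lemma prod_hi_le : ∃ C : ℝ, 0 < C ∧ ∀ z : ℝ, 2 ≤ z → ∀ p : ℕ, 2 ≤ p → (p : ℝ) < z →
    ∏ q ∈ (⌈z⌉₊).primesBelow with p < q, (1 + 12 / (q : ℝ) + 4 / (q : ℝ) ^ 2) ≤ C / (Real.log p / Real.log z) ^ 36 := by
  obtain ⟨S, hS0, hS⟩ := sum_inv_sq_bound
  refine ⟨Real.exp (48 + 48 + 4 * S), Real.exp_pos _, ?_⟩
  intro z hz p hp hpz
  have hlz : 0 < Real.log z := Real.log_pos (by linarith)
  have hp1 : (2 : ℝ) ≤ p := by exact_mod_cast hp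
  have hlp : 0 < Real.log p := Real.log_pos (by linarith)
  set u := Real.log p / Real.log z with hu
  have hu0 : 0 < u := by positivity
  have hu1 : u ≤ 1 := by
    rw [hu, div_le_one hlz]
    exact Real.log_le_log (by linarith) hpz.le
  have hl2 : 2 / 3 ≤ Real.log 2 := by linarith [Real.log_two_gt_d9]
  set k : ℕ := ⌈Real.log (2 / u) / Real.log 2⌉₊ with hk
  have hlu : 0 ≤ Real.log (2 / u) := Real.log_nonneg (by rw [le_div_iff₀ hu0]; linarith)
  have hk1 : Real.log (2 / u) ≤ k * Real.log 2 := by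
    rw [← div_le_iff₀ (by linarith)]
    exact Nat.le_ceil _
  have hk2 : (k : ℝ) ≤ 2 + 3 / 2 * Real.log (1 / u) := by
    have h1 : (k : ℝ) < Real.log (2 / u) / Real.log 2 + 1 := Nat.ceil_lt_add_one (by positivity)
    have h2 : Real.log (2 / u) = Real.log 2 + Real.log (1 / u) := by
      rw [← Real.log_mul (by norm_num) (by positivity)]; congr 1; ring
    have h3 : 0 ≤ Real.log (1 / u) := Real.log_nonneg (by rw [le_div_iff₀ hu0]; linarith)
    have h4 : Real.log (2 / u) / Real.log 2 ≤ 1 + 3 / 2 * Real.log (1 / u) := by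
      rw [h2, div_le_iff₀ (by linarith)]
      nlinarith
    linarith
  have hN : ⌈z⌉₊ ≤ p ^ (2 ^ k) := by
    have h0 : 0 < (⌈z⌉₊ : ℝ) := by linarith [Nat.le_ceil z]
    have h1 : Real.log (⌈z⌉₊ : ℝ) ≤ Real.log ((p : ℝ) ^ (2 ^ k)) := by
      refine (log_ceil_le hz).trans ?_
      rw [Real.log_pow]
      push_cast
      have h2 : 2 / u ≤ 2 ^ k := by
        have : Real.log (2 / u) ≤ Real.log (2 ^ k) := by rw [Real.log_pow]; exact hk1
        exact (Real.log_le_log_iff (by positivity) (by positivity)).1 this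
      have h3 : 2 * Real.log z = 2 / u * Real.log p := by
        rw [hu]; field_simp
      rw [h3]
      exact mul_le_mul_of_nonneg_right h2 hlp.le
    have := (Real.log_le_log_iff h0 (by positivity)).1 h1
    exact_mod_cast this
  have hsum := sum_inv_le ⌈z⌉₊ k p hp hN
  have h4 : 2 * Real.log 4 / Real.log p ≤ 4 := by
    have e : Real.log 4 = 2 * Real.log 2 := by
      rw [show (4 : ℝ) = 2 ^ 2 by norm_num, Real.log_pow]; norm_num
    rw [div_le_iff₀ hlp, e]
    have := Real.log_le_log (by norm_num) hp1
    linarith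
  have hA : ∑ q ∈ (⌈z⌉₊).primesBelow with p < q, (1 : ℝ) / q ≤ 2 * k + 4 := by
    refine le_trans ?_ (hsum.trans (by linarith))
    apply sum_le_sum_of_subset_of_nonneg
    · intro q hq
      rw [mem_filter] at hq ⊢
      exact ⟨hq.1, hq.2.le⟩
    · intro q _ _; positivity
  calc ∏ q ∈ (⌈z⌉₊).primesBelow with p < q, (1 + 12 / (q : ℝ) + 4 / (q : ℝ) ^ 2)
      ≤ ∏ q ∈ (⌈z⌉₊).primesBelow with p < q, Real.exp (12 * (1 / (q : ℝ)) + 4 * (1 / (q : ℝ) ^ 2)) := by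
        apply prod_le_prod
        · intro q _; positivity
        · intro q _
          have := Real.add_one_le_exp (12 * (1 / (q : ℝ)) + 4 * (1 / (q : ℝ) ^ 2))
          refine le_trans (le_of_eq ?_) this
          ring
    _ = Real.exp (12 * ∑ q ∈ (⌈z⌉₊).primesBelow with p < q, (1 : ℝ) / q +
          4 * ∑ q ∈ (⌈z⌉₊).primesBelow with p < q, (1 : ℝ) / (q : ℝ) ^ 2) := by
        rw [← Real.exp_sum, sum_add_distrib, mul_sum, mul_sum]
    _ ≤ Real.exp (48 + 48 + 4 * S + 36 * Real.log (1 / u)) := by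
        apply Real.exp_le_exp.2
        have := hS ((⌈z⌉₊).primesBelow.filter (fun q => p < q))
        linarith
    _ = _ := by
        rw [Real.exp_add _ (36 * _), ← Real.log_rpow (by positivity),
          Real.exp_log (by positivity)]
        rw [show (36 : ℝ) = ((36 : ℕ) : ℝ) by norm_num, Real.rpow_natCast]
        rw [one_div, inv_pow, div_eq_mul_inv]

lemma log_le_prod (N : ℕ) (hN : 1 ≤ N) :
    Real.log N ≤ ∏ p ∈ N.primesBelow, (1 - 1 / (p : ℝ))⁻¹ := by
  let f : ℕ →* ℝ :=
    { toFun := fun n => (n : ℝ)⁻¹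
      map_one' := by simp
      map_mul' := by intro a b; push_cast; rw [mul_inv] }
  have hf : ∀ n, f n = (n : ℝ)⁻¹ := fun n => rfl
  have h := EulerProduct.summable_and_hasSum_smoothNumbers_prod_primesBelow_geometric (f := f)
    (fun {p} hp => by
      rw [hf, norm_inv, Real.norm_natCast]
      exact inv_lt_one_of_one_lt₀ (by exact_mod_cast hp.one_lt)) N
  have h2 : ∏ p ∈ N.primesBelow, (1 - 1 / (p : ℝ))⁻¹ = ∏ p ∈ N.primesBelow, (1 - f p)⁻¹ := by
    apply prod_congr rfl
    intro p _
    rw [hf, one_div]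
  rw [h2, ← h.2.tsum_eq]
  obtain ⟨n, rfl⟩ : ∃ n, N = n + 1 := ⟨N - 1, by omega⟩
  refine (log_add_one_le_harmonic n).trans ?_
  rw [harmonic_eq_sum_Icc]
  push_cast
  have hsm : ∀ x ∈ Icc 1 n, x ∈ (n + 1).smoothNumbers := by
    intro x hx
    rw [mem_Icc] at hx
    exact Nat.mem_smoothNumbers_of_lt (by omega) (by omega)
  have h3 := sum_subtype_of_mem (fun m : ℕ => f m) hsm
  calc ∑ x ∈ Icc 1 n, (x : ℝ)⁻¹ = ∑ x ∈ (Icc 1 n).subtype (· ∈ (n + 1).smoothNumbers), f x :=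
        h3.symm
    _ ≤ _ := h.2.summable.sum_le_tsum _ (fun m _ => by rw [hf]; positivity)

/-- (I1) -/
lemma prod_lo_le : ∃ C : ℝ, 0 < C ∧ ∀ N : ℕ, 2 ≤ N →
    ∏ q ∈ N.primesBelow, (1 - 1 / (q : ℝ) + 1 / (q : ℝ) ^ 2) ≤ C / Real.log N := by
  obtain ⟨S, hS0, hS⟩ := sum_inv_sq_bound
  refine ⟨Real.exp (2 * S), Real.exp_pos _, ?_⟩
  intro N hN
  have hl : 0 < Real.log N := Real.log_pos (by exact_mod_cast hN)
  have hq : ∀ q ∈ N.primesBelow, 1 / (q : ℝ) ≤ 1 / 2 := by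
    intro q hq
    have : (2 : ℝ) ≤ q := by exact_mod_cast (Nat.prime_of_mem_primesBelow hq).two_le
    exact one_div_le_one_div_of_le (by norm_num) this
  have hq0 : ∀ q : ℕ, 0 ≤ 1 / (q : ℝ) := fun q => by positivity
  have h1 : ∏ q ∈ N.primesBelow, (1 - 1 / (q : ℝ) + 1 / (q : ℝ) ^ 2) ≤
      ∏ q ∈ N.primesBelow, ((1 - 1 / (q : ℝ)) * Real.exp (2 * (1 / (q : ℝ) ^ 2))) := by
    apply prod_le_prod
    · intro q h
      have := hq q h
      have : 0 ≤ 1 / (q : ℝ) ^ 2 := by positivity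
      linarith
    · intro q h
      have a := hq q h
      have b := Real.add_one_le_exp (2 * (1 / (q : ℝ) ^ 2))
      have c : 1 / (q : ℝ) ^ 2 = (1 / (q : ℝ)) ^ 2 := by ring
      have d := hq0 q
      rw [c] at b ⊢
      generalize 1 / (q : ℝ) = t at *
      calc 1 - t + t ^ 2 ≤ (1 - t) * (2 * t ^ 2 + 1) := by
            have : 0 ≤ t ^ 2 * (1 - 2 * t) := mul_nonneg (sq_nonneg t) (by linarith)
            nlinarith
        _ ≤ _ := mul_le_mul_of_nonneg_left b (by linarith)
  rw [prod_mul_distrib, ← Real.exp_sum, ← mul_sum] at h1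
  have h2 := log_le_prod N (by omega)
  rw [prod_inv_distrib] at h2
  have hpos : 0 < ∏ q ∈ N.primesBelow, (1 - 1 / (q : ℝ)) :=
    prod_pos (fun q h => by linarith [hq q h])
  have h3 : ∏ q ∈ N.primesBelow, (1 - 1 / (q : ℝ)) ≤ 1 / Real.log N := by
    rw [one_div]
    exact (le_inv_comm₀ hl hpos).1 h2
  refine h1.trans ?_
  rw [div_eq_mul_one_div, mul_comm]
  apply mul_le_mul _ h3 hpos.le (Real.exp_pos _).le
  apply Real.exp_le_exp.2
  linarith [hS N.primesBelow]


/-- elements of `M` that are at least `q` -/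
def up (M : Finset ℕ) (q : ℕ) : Finset ℕ := M.filter (fun r => q ≤ r)

def par (o : Bool) (n : ℕ) : Prop := if o then Odd n else Even n

def cnd (E : ℝ) (o : Bool) (M : Finset ℕ) (q : ℕ) : Prop :=
  par o (up M q).card → (((∏ r ∈ up M q, r : ℕ) : ℝ)) * (q : ℝ) ^ 30 < E

def ff (E : ℝ) (o : Bool) (c : Finset ℕ) (p : ℕ) : Prop :=
  p ∈ c ∧ ¬ cnd E o c p ∧ ∀ q ∈ c, p < q → cnd E o c q

lemma par_add_two (o : Bool) (n : ℕ) : par o (n + 2) ↔ par o n := by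
  unfold par
  cases o <;> simp [Nat.even_add, Nat.odd_add]

lemma log_ratio_ge (z l : ℝ) (o : Bool) (hz : 1 < z) (hl : 30 * Real.log z ≤ l) (n : ℕ) :
    ∀ c : Finset ℕ, c.card = n → (∀ q ∈ c, 1 ≤ q ∧ (q : ℝ) < z) → par o c.card →
    (∀ q ∈ c, (∃ r ∈ c, r < q) → par o (up c q).card →
      ∑ r ∈ up c q, Real.log r + 30 * Real.log q < l) →
    30 * Real.log z * (14 / 15 : ℝ) ^ ((n + 1) / 2) ≤ l - ∑ r ∈ c, Real.log r := by
  have hlz : 0 < Real.log z := Real.log_pos hz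
  induction n using Nat.strong_induction_on with
  | _ n ih =>
  intro c hcn hc hpar hcond
  have hlog : ∀ q ∈ c, Real.log q ≤ Real.log z := by
    intro q hq
    obtain ⟨h1, h2⟩ := hc q hq
    exact Real.log_le_log (by exact_mod_cast h1) h2.le
  have hsum : ∑ r ∈ c, Real.log r ≤ n * Real.log z := by
    rw [← hcn, ← nsmul_eq_mul]
    exact sum_le_card_nsmul c _ _ hlog
  rcases Nat.lt_or_ge n 3 with hn | hn
  · interval_cases n
    · norm_num at hsum ⊢; linarith
    · norm_num at hsum ⊢; linarith
    · norm_num at hsum ⊢; linarith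
  · have hne : c.Nonempty := by rw [← card_pos]; omega
    set p := c.min' hne with hp
    have hpc : p ∈ c := min'_mem _ _
    have hc1 : (c.erase p).card = n - 1 := by rw [card_erase_of_mem hpc, hcn]
    have hne1 : (c.erase p).Nonempty := by rw [← card_pos]; omega
    set p' := (c.erase p).min' hne1 with hp'
    have hpc' : p' ∈ c.erase p := min'_mem _ _
    set c2 := (c.erase p).erase p' with hc2def
    have hc2 : c2.card = n - 2 := by rw [card_erase_of_mem hpc', hc1]; omega
    have hne2 : c2.Nonempty := by rw [← card_pos]; omega
    have hsub : ∀ q ∈ c2, q ∈ c ∧ p < q ∧ p' < q := by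
      intro q hq
      have h1 : q ∈ c.erase p := mem_of_mem_erase hq
      have h2 : q ∈ c := mem_of_mem_erase h1
      have h3 : p ≤ q := min'_le _ _ h2
      have h4 : p' ≤ q := min'_le _ _ h1
      have h5 : q ≠ p := ne_of_mem_erase h1
      have h6 : q ≠ p' := ne_of_mem_erase hq
      exact ⟨h2, by omega, by omega⟩
    have hup : ∀ q ∈ c2, up c q = up c2 q := by
      intro q hq
      obtain ⟨h1, h2, h3⟩ := hsub q hq
      ext r
      simp only [up, mem_filter, hc2def, mem_erase]
      constructor
      · rintro ⟨a, b⟩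
        exact ⟨⟨by omega, by omega, a⟩, b⟩
      · rintro ⟨⟨_, _, a⟩, b⟩
        exact ⟨a, b⟩
    have hpar2 : par o c2.card := by
      rw [← par_add_two]
      rwa [show c2.card + 2 = c.card by omega]
    have key := ih (n - 2) (by omega) c2 hc2 (fun q hq => hc q (hsub q hq).1) hpar2 (by
      intro q hq _ hpq
      rw [← hup q hq] at hpq ⊢
      exact hcond q (hsub q hq).1 ⟨p, hpc, (hsub q hq).2.1⟩ hpq)
    set q := c2.min' hne2 with hq
    have hqc : q ∈ c2 := min'_mem _ _
    have hupq : up c q = c2 := by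
      rw [hup q hqc]
      apply filter_true_of_mem
      intro r hr
      exact min'_le _ _ hr
    obtain ⟨hqc', hpq, hpq'⟩ := hsub q hqc
    have hcq := hcond q hqc' ⟨p, hpc, hpq⟩ (by rw [hupq]; exact hpar2)
    rw [hupq] at hcq
    have e1 : ∑ r ∈ c, Real.log r = Real.log p + (Real.log p' + ∑ r ∈ c2, Real.log r) := by
      rw [← add_sum_erase c _ hpc, ← add_sum_erase (c.erase p) _ hpc']
    have l1 : Real.log p ≤ Real.log q :=
      Real.log_le_log (by exact_mod_cast (hc p hpc).1) (by exact_mod_cast hpq.le)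
    have l2 : Real.log p' ≤ Real.log q :=
      Real.log_le_log (by exact_mod_cast (hc p' (mem_of_mem_erase hpc')).1) (by exact_mod_cast hpq'.le)
    have e2 : (n + 1) / 2 = (n - 2 + 1) / 2 + 1 := by omega
    rw [e1, e2, pow_succ]
    linarith

lemma ff_bound {z E : ℝ} (o : Bool) (hz : 1 < z) (hE : z ^ 30 ≤ E) (c : Finset ℕ) (p : ℕ)
    (hc : ∀ q ∈ c, 2 ≤ q ∧ (q : ℝ) < z ∧ p ≤ q) (h : ff E o c p) :
    1 ≤ 2 * 2 ^ c.card * (Real.log p / Real.log z) ^ 20 := by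
  obtain ⟨hp, hf, hg⟩ := h
  have hlz : 0 < Real.log z := Real.log_pos hz
  have hE0 : 0 < E := lt_of_lt_of_le (by positivity) hE
  have hupp : up c p = c := filter_true_of_mem (fun r hr => (hc r hr).2.2)
  unfold cnd at hf
  rw [hupp] at hf
  push Not at hf
  obtain ⟨hpar, hfail⟩ := hf
  have hlogprod : ∀ s ⊆ c, Real.log (((∏ r ∈ s, r : ℕ) : ℝ)) = ∑ r ∈ s, Real.log r := by
    intro s hs
    rw [Nat.cast_prod, Real.log_prod]
    intro r hr
    have := (hc r (hs hr)).1
    exact_mod_cast (by omega : r ≠ 0)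
  have hprodpos : ∀ s ⊆ c, 0 < (((∏ r ∈ s, r : ℕ) : ℝ)) := by
    intro s hs
    exact_mod_cast prod_pos (fun r hr => by have := (hc r (hs hr)).1; omega)
  have hpos : ∀ q ∈ c, (0 : ℝ) < q := by
    intro q hq
    exact_mod_cast (by have := (hc q hq).1; omega : 0 < q)
  have key := log_ratio_ge z (Real.log E) o hz (by
      have := Real.log_le_log (by positivity) hE
      rw [Real.log_pow] at this
      exact_mod_cast this) c.card c rfl (fun q hq => ⟨by have := (hc q hq).1; omega, (hc q hq).2.1⟩)
    hpar (by
      rintro q hq ⟨r, hr, hrq⟩ hpq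
      have h1 := hg q hq (lt_of_le_of_lt (hc r hr).2.2 hrq) hpq
      have hs : up c q ⊆ c := filter_subset _ _
      have := hprodpos _ hs
      have hq0 := hpos q hq
      have h2 := Real.log_lt_log (by positivity) h1
      rw [Real.log_mul this.ne' (by positivity), hlogprod _ hs, Real.log_pow] at h2
      exact_mod_cast h2)
  have hp0 := hpos p hp
  have h3 := Real.log_le_log hE0 hfail
  rw [Real.log_mul (hprodpos c subset_rfl).ne' (by positivity), hlogprod c subset_rfl,
    Real.log_pow] at h3
  push_cast at h3
  have h4 : (14 / 15 : ℝ) ^ ((c.card + 1) / 2) ≤ Real.log p / Real.log z := by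
    rw [le_div_iff₀ hlz]
    linarith
  have h5 : ((14 / 15 : ℝ) ^ ((c.card + 1) / 2)) ^ 20 ≤ (Real.log p / Real.log z) ^ 20 :=
    pow_le_pow_left₀ (by positivity) h4 20
  have h6 : (1 / 4 : ℝ) ^ ((c.card + 1) / 2) ≤ ((14 / 15 : ℝ) ^ ((c.card + 1) / 2)) ^ 20 := by
    rw [← pow_mul, mul_comm, pow_mul]
    apply pow_le_pow_left₀ (by norm_num)
    norm_num
  have h7 : (1 : ℝ) ≤ 2 * 2 ^ c.card * (1 / 4 : ℝ) ^ ((c.card + 1) / 2) := by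
    have : (4 : ℝ) ^ ((c.card + 1) / 2) ≤ 2 * 2 ^ c.card := by
      rw [show (4 : ℝ) = 2 ^ 2 by norm_num, ← pow_mul, ← pow_succ']
      exact pow_le_pow_right₀ (by norm_num) (by omega)
    rw [one_div, inv_pow, ← div_eq_mul_inv, le_div_iff₀ (by positivity)]
    linarith
  refine h7.trans ?_
  apply mul_le_mul_of_nonneg_left (h6.trans h5)
  positivity

lemma up_up {M : Finset ℕ} {p q : ℕ} (h : p ≤ q) : up (up M p) q = up M q := by
  ext r
  simp only [up, mem_filter]
  constructor
  · rintro ⟨⟨a, _⟩, b⟩; exact ⟨a, b⟩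
  · rintro ⟨a, b⟩; exact ⟨⟨a, h.trans b⟩, b⟩

lemma cnd_up {E : ℝ} {o : Bool} {M : Finset ℕ} {p q : ℕ} (h : p ≤ q) :
    cnd E o (up M p) q ↔ cnd E o M q := by
  unfold cnd
  rw [up_up h]

lemma good_decomp (E : ℝ) (o : Bool) (P M : Finset ℕ) (hM : M ⊆ P) :
    (if (∀ q ∈ M, cnd E o M q) then (1 : ℝ) else 0) =
      1 - ∑ p ∈ P, if ff E o (up M p) p then (1 : ℝ) else 0 := by
  have hff : ∀ p, ff E o (up M p) p ↔ p ∈ M ∧ ¬ cnd E o M p ∧ ∀ q ∈ M, p < q → cnd E o M q := by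
    intro p
    unfold ff
    rw [cnd_up le_rfl]
    constructor
    · rintro ⟨a, b, c⟩
      refine ⟨(mem_filter.1 a).1, b, fun q hq hpq => ?_⟩
      exact (cnd_up hpq.le).1 (c q (mem_filter.2 ⟨hq, hpq.le⟩) hpq)
    · rintro ⟨a, b, c⟩
      refine ⟨mem_filter.2 ⟨a, le_rfl⟩, b, fun q hq hpq => ?_⟩
      exact (cnd_up hpq.le).2 (c q (mem_filter.1 hq).1 hpq)
  by_cases h : ∀ q ∈ M, cnd E o M q
  · rw [if_pos h, sum_eq_zero, sub_zero]
    intro p _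
    rw [if_neg]
    intro h1
    obtain ⟨a, b, _⟩ := (hff p).1 h1
    exact b (h p a)
  · rw [if_neg h]
    have hne : (M.filter (fun q => ¬ cnd E o M q)).Nonempty := by
      push Not at h
      obtain ⟨q, hq, hq'⟩ := h
      exact ⟨q, mem_filter.2 ⟨hq, hq'⟩⟩
    set p := (M.filter (fun q => ¬ cnd E o M q)).max' hne with hp
    have hpm := mem_filter.1 (max'_mem _ hne)
    rw [← hp] at hpm
    have hpff : ff E o (up M p) p := by
      rw [hff]
      refine ⟨hpm.1, hpm.2, fun q hq hpq => ?_⟩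
      by_contra hc
      have := le_max' _ _ (mem_filter.2 ⟨hq, hc⟩ : q ∈ M.filter (fun q => ¬ cnd E o M q))
      omega
    rw [sum_eq_single_of_mem p (hM hpm.1), if_pos hpff, sub_self]
    intro b _ hb
    rw [if_neg]
    intro h1
    obtain ⟨a1, b1, c1⟩ := (hff b).1 h1
    rcases lt_or_gt_of_ne hb with h2 | h2
    · exact hpm.2 (c1 p hpm.1 h2)
    · exact b1 (((hff p).1 hpff).2.2 b a1 h2)

lemma sum_pw (s : Finset ℕ) (f g : ℕ → ℝ) :
    ∑ t ∈ s.powerset, ∏ q ∈ s, (if q ∈ t then f q else g q) = ∏ q ∈ s, (f q + g q) := by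
  rw [prod_add]
  apply sum_congr rfl
  intro t ht
  rw [mem_powerset] at ht
  rw [prod_ite, filter_mem_eq_inter, inter_eq_right.2 ht]
  congr 1
  apply prod_congr _ (fun _ _ => rfl)
  ext q; simp

lemma split_powerset (P : Finset ℕ) (p : ℕ) (F G : Finset ℕ → ℝ) :
    ∑ M ∈ P.powerset, F (up M p) * G (M.filter (fun q => q < p)) =
      (∑ b ∈ (up P p).powerset, F b) * ∑ k ∈ (P.filter (fun q => q < p)).powerset, G k := by
  rw [sum_mul_sum, ← sum_product']
  apply sum_nbij' (fun M => (up M p, M.filter (fun q => q < p))) (fun x => x.1 ∪ x.2)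
  · intro M hM
    rw [mem_powerset] at hM
    simp only [mem_product, mem_powerset]
    exact ⟨filter_subset_filter _ hM, filter_subset_filter _ hM⟩
  · rintro ⟨b, k⟩ h
    simp only [mem_product, mem_powerset] at h ⊢
    exact union_subset (h.1.trans (filter_subset _ _)) (h.2.trans (filter_subset _ _))
  · intro M _
    ext q
    simp only [up, mem_union, mem_filter]
    constructor
    · rintro (h | h) <;> exact h.1
    · intro h
      rcases Nat.lt_or_ge q p with h1 | h1
      · right; exact ⟨h, h1⟩
      · left; exact ⟨h, h1⟩
  · rintro ⟨b, k⟩ h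
    simp only [mem_product, mem_powerset] at h
    have hb : ∀ q ∈ b, p ≤ q := fun q hq => (mem_filter.1 (h.1 hq)).2
    have hk : ∀ q ∈ k, q < p := fun q hq => (mem_filter.1 (h.2 hq)).2
    ext q
    · simp only [up, mem_filter, mem_union]
      constructor
      · rintro ⟨h1 | h1, h2⟩
        · exact h1
        · have := hk q h1; omega
      · intro h1; exact ⟨Or.inl h1, hb q h1⟩
    · simp only [mem_filter, mem_union]
      constructor
      · rintro ⟨h1 | h1, h2⟩
        · have := hb q h1; omega
        · exact h1
      · intro h1; exact ⟨Or.inr h1, hk q h1⟩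
  · intro M _; rfl

lemma prod_split (P : Finset ℕ) (p : ℕ) (f g : ℕ → ℝ) :
    (∏ q ∈ up P p, g q) * (∏ q ∈ P.filter (fun q => q < p), f q) =
      ∏ q ∈ P, (if q < p then f q else g q) := by
  rw [prod_ite, mul_comm]
  congr 1
  apply prod_congr _ (fun _ _ => rfl)
  ext q; simp [up]

lemma phi_prod (P S M : Finset ℕ) (hS : S ⊆ P) (hM : M ⊆ P) (f : ℕ → ℝ) :
    ∏ q ∈ P, (if q ∈ M then f q else if q ∈ S then 0 else 1) =
      if S ⊆ M then ∏ q ∈ M, f q else 0 := by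
  split_ifs with h
  · rw [← prod_subset hM (f := fun q => if q ∈ M then f q else if q ∈ S then 0 else 1)]
    · apply prod_congr rfl
      intro q hq
      rw [if_pos hq]
    · intro q _ hq
      rw [if_neg hq, if_neg (fun h1 => hq (h h1))]
  · obtain ⟨q, hq, hq'⟩ := not_subset.1 h
    apply prod_eq_zero (hS hq)
    rw [if_neg hq', if_pos hq]

lemma sum_half_pow_up (S : Finset ℕ) :
    ∑ p ∈ S, (1 / 2 : ℝ) ^ (up S p).card = 1 - (1 / 2) ^ S.card := by
  induction S using Finset.induction_on_min with
  | empty => simp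
  | insert a s ha ih =>
    have has : a ∉ s := fun h => lt_irrefl _ (ha a h)
    rw [sum_insert has, card_insert_of_notMem has]
    have h1 : up (insert a s) a = insert a s := by
      apply filter_true_of_mem
      intro r hr
      rcases mem_insert.1 hr with h | h
      · exact h.ge
      · exact (ha r h).le
    have h2 : ∀ p ∈ s, up (insert a s) p = up s p := by
      intro p hp
      have := ha p hp
      rw [up, filter_insert, if_neg (by omega)]
      rfl
    rw [h1, card_insert_of_notMem has, sum_congr rfl (fun p hp => by rw [h2 p hp]), ih]
    ring


noncomputable def yy (E : ℝ) (o : Bool) (P S : Finset ℕ) : ℝ :=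
  ∑ M ∈ P.powerset, (if (∀ q ∈ M, cnd E o M q) then (1 : ℝ) else 0) *
    (if S ⊆ M then ∏ q ∈ M, (-1 / (q : ℝ)) else 0)

noncomputable def tt (E : ℝ) (o : Bool) (P S : Finset ℕ) (p : ℕ) : ℝ :=
  ∑ M ∈ P.powerset, (if ff E o (up M p) p then (1 : ℝ) else 0) *
    (if S ⊆ M then ∏ q ∈ M, (-1 / (q : ℝ)) else 0)

lemma yy_eq (E : ℝ) (o : Bool) (P S : Finset ℕ) (hS : S ⊆ P) :
    yy E o P S = ∏ q ∈ P, (-1 / (q : ℝ) + if q ∈ S then 0 else 1) - ∑ p ∈ P, tt E o P S p := by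
  unfold yy tt
  rw [sum_comm, ← sum_pw, ← sum_sub_distrib]
  apply sum_congr rfl
  intro M hM
  rw [mem_powerset] at hM
  rw [phi_prod P S M hS hM, good_decomp E o P M hM, sub_mul, one_mul, sum_mul]

lemma tt_bound {z E : ℝ} (o : Bool) (hz : 1 < z) (hE : z ^ 30 ≤ E) (P S : Finset ℕ) (hS : S ⊆ P)
    (hP : ∀ q ∈ P, 2 ≤ q ∧ (q : ℝ) < z) (p : ℕ) :
    |tt E o P S p| ≤ 2 * (Real.log p / Real.log z) ^ 20 *
      ∏ q ∈ P, (if q < p then (if q ∈ S then 1 / (q : ℝ) else 1 - 1 / (q : ℝ)) else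
        (2 / (q : ℝ) + if q ∈ S ∨ q = p then 0 else 1)) := by
  have hlz : 0 < Real.log z := Real.log_pos hz
  have hlp : 0 ≤ Real.log p := Real.log_natCast_nonneg p
  set φ : Finset ℕ → ℕ → ℝ := fun M q => if q ∈ M then -1 / (q : ℝ) else if q ∈ S then 0 else 1
    with hφ
  have h1 : tt E o P S p =
      (∑ b ∈ (up P p).powerset, (if ff E o b p then (1 : ℝ) else 0) * ∏ q ∈ up P p, φ b q) *
        ∑ k ∈ (P.filter (fun q => q < p)).powerset, ∏ q ∈ P.filter (fun q => q < p), φ k q := by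
    rw [← split_powerset P p (fun b => (if ff E o b p then (1 : ℝ) else 0) * ∏ q ∈ up P p, φ b q)
      (fun k => ∏ q ∈ P.filter (fun q => q < p), φ k q)]
    unfold tt
    apply sum_congr rfl
    intro M hM
    rw [mem_powerset] at hM
    rw [mul_assoc]
    congr 1
    rw [← phi_prod P S M hS hM, prod_split]
    apply prod_congr rfl
    intro q hq
    simp only [hφ, up, mem_filter]
    by_cases h : q < p
    · simp [h]
    · simp [h, not_lt.1 h]
  rw [h1, sum_pw, abs_mul, ← prod_split, mul_comm (∏ q ∈ up P p, _), ← mul_assoc, mul_comm]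
  rw [mul_comm (2 * _) (∏ q ∈ _, _), mul_assoc]
  have h2 : |∏ q ∈ P.filter (fun q => q < p), (-1 / (q : ℝ) + if q ∈ S then 0 else 1)| =
      ∏ q ∈ P.filter (fun q => q < p), (if q ∈ S then 1 / (q : ℝ) else 1 - 1 / (q : ℝ)) := by
    rw [abs_prod]
    apply prod_congr rfl
    intro q hq
    have hq2 : (2 : ℝ) ≤ q := by exact_mod_cast (hP q (mem_filter.1 hq).1).1
    have hq1 : 1 / (q : ℝ) ≤ 1 := by rw [div_le_one (by linarith)]; linarith
    split_ifs
    · rw [add_zero, abs_div, abs_neg, abs_one, abs_of_nonneg (by linarith : (0 : ℝ) ≤ q)]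
    · rw [show -1 / (q : ℝ) + 1 = 1 - 1 / (q : ℝ) by ring, abs_of_nonneg (by linarith)]
  rw [h2]
  apply mul_le_mul_of_nonneg_left
  · rw [← sum_pw, mul_sum]
    refine (abs_sum_le_sum_abs _ _).trans ?_
    apply sum_le_sum
    intro b hb
    rw [mem_powerset] at hb
    have hnn : 0 ≤ ∏ q ∈ up P p, (if q ∈ b then 2 / (q : ℝ) else if q ∈ S ∨ q = p then 0 else 1) := by
      apply prod_nonneg
      intro q _
      split_ifs <;> positivity
    by_cases hff : ff E o b p
    · rw [if_pos hff, one_mul]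
      have hbd := ff_bound o hz hE b p (fun q hq => by
        have h3 := mem_filter.1 (hb hq)
        exact ⟨(hP q h3.1).1, (hP q h3.1).2, h3.2⟩) hff
      have e1 : ∏ q ∈ up P p, (if q ∈ b then 2 / (q : ℝ) else if q ∈ S ∨ q = p then 0 else 1) =
          2 ^ b.card * |∏ q ∈ up P p, φ b q| := by
        have e2 : (2 : ℝ) ^ b.card = ∏ q ∈ up P p, (if q ∈ b then (2 : ℝ) else 1) := by
          rw [prod_ite, prod_const, prod_const_one, mul_one, filter_mem_eq_inter,
            inter_eq_right.2 hb]
        rw [e2, abs_prod, ← prod_mul_distrib]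
        apply prod_congr rfl
        intro q hq
        simp only [hφ]
        by_cases hqb : q ∈ b
        · simp only [if_pos hqb]
          rw [abs_div, abs_neg, abs_one, Nat.abs_cast]; ring
        · have hqp : q ≠ p := fun h => hqb (h ▸ hff.1)
          simp only [if_neg hqb, hqp, or_false, one_mul]
          split_ifs <;> simp
      rw [e1]
      have := abs_nonneg (∏ q ∈ up P p, φ b q)
      nlinarith
    · rw [if_neg hff, zero_mul, abs_zero]
      positivity
  · apply prod_nonneg
    intro q hq
    have hq2 : (2 : ℝ) ≤ q := by exact_mod_cast (hP q (mem_filter.1 hq).1).1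
    have hq1 : 1 / (q : ℝ) ≤ 1 := by rw [div_le_one (by linarith)]; linarith
    split_ifs
    · positivity
    · linarith

/-- the majorant after Cauchy-Schwarz -/
noncomputable def kk (P : Finset ℕ) (p : ℕ) (S : Finset ℕ) : ℝ :=
  ∏ q ∈ P, (if q ∈ S then (if q < p then 1 / (q : ℝ) else 8 / (q : ℝ)) else
    (if q < p then (1 - 1 / (q : ℝ)) ^ 2 else if q = p then 4 / (q : ℝ) else (1 + 2 / (q : ℝ)) ^ 2))

lemma gg_le (P S : Finset ℕ) (hS : S ⊆ P) (hP : ∀ q ∈ P, 2 ≤ q) (p : ℕ) (hp : p ∈ P) :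
    ((∏ q ∈ S, q : ℕ) : ℝ) * (∏ q ∈ P, (if q < p then (if q ∈ S then 1 / (q : ℝ) else 1 - 1 / (q : ℝ)) else
        (2 / (q : ℝ) + if q ∈ S ∨ q = p then 0 else 1))) ^ 2 ≤
      ((1 / 2 : ℝ) ^ (up S p).card * (1 / (p : ℝ) + if p ∈ S then 1 else 0)) * kk P p S := by
  have e1 : ((∏ q ∈ S, q : ℕ) : ℝ) = ∏ q ∈ P, (if q ∈ S then (q : ℝ) else 1) := by
    rw [prod_ite, prod_const_one, mul_one, filter_mem_eq_inter, inter_eq_right.2 hS, Nat.cast_prod]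
  have e2 : (1 / 2 : ℝ) ^ (up S p).card = ∏ q ∈ P, (if q ∈ up S p then (1 / 2 : ℝ) else 1) := by
    rw [prod_ite, prod_const, prod_const_one, mul_one, filter_mem_eq_inter,
      inter_eq_right.2 (show up S p ⊆ P from (filter_subset _ _).trans hS)]
  have e3 : (1 / (p : ℝ) + if p ∈ S then 1 else 0) =
      ∏ q ∈ P, (if q = p then (1 / (q : ℝ) + if q ∈ S then 1 else 0) else 1) := by
    rw [prod_ite_eq' P p, if_pos hp]
  unfold kk
  rw [e1, e2, e3, ← prod_pow, ← prod_mul_distrib, ← prod_mul_distrib, ← prod_mul_distrib]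
  apply prod_le_prod
  · intro q _
    apply mul_nonneg
    · split_ifs <;> positivity
    · positivity
  · intro q hq
    have hq0 : (0 : ℝ) < q := by have := hP q hq; exact_mod_cast (by omega : 0 < q)
    simp only [up, mem_filter]
    rcases lt_trichotomy q p with h | h | h
    · have h1 : ¬ p ≤ q := by omega
      have h2 : q ≠ p := by omega
      by_cases hs : q ∈ S
      · simp only [h, h1, h2, hs, if_true, if_false, and_false]
        apply le_of_eq; field_simp
      · simp [h, h2, hs]
    · subst h
      by_cases hs : q ∈ S
      · simp only [hs, lt_irrefl, le_refl, if_true, if_false, and_true, or_true, add_zero]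
        have : (q : ℝ) * (2 / q) ^ 2 = 4 / q := by field_simp; norm_num
        rw [this]
        have h3 : 1 / 2 * (1 / (q : ℝ) + 1) * (8 / q) = 4 / q + 4 / q ^ 2 := by field_simp; ring
        rw [h3]
        have : 0 ≤ 4 / (q : ℝ) ^ 2 := by positivity
        linarith
      · simp only [hs, lt_irrefl, le_refl, if_true, if_false, and_true, or_true, add_zero]
        apply le_of_eq; field_simp; norm_num
    · have h1 : ¬ q < p := by omega
      have h2 : q ≠ p := by omega
      by_cases hs : q ∈ S
      · simp only [h.le, h1, h2, hs, if_true, if_false, and_true, true_or, add_zero]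
        apply le_of_eq; field_simp; norm_num
      · simp only [h1, h2, hs, if_false, false_and, or_false, one_mul]
        apply le_of_eq; ring

lemma sum_kk (P : Finset ℕ) (p : ℕ) (hp : p ∈ P) :
    ∑ S ∈ P.powerset, kk P p S =
      (∏ q ∈ P.filter (fun q => q < p), (1 - 1 / (q : ℝ) + 1 / (q : ℝ) ^ 2)) *
        (12 / (p : ℝ)) * ∏ q ∈ P.filter (fun q => p < q), (1 + 12 / (q : ℝ) + 4 / (q : ℝ) ^ 2) := by
  unfold kk
  rw [sum_pw]
  have e : ∀ q ∈ P, ((if q < p then 1 / (q : ℝ) else 8 / (q : ℝ)) +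
      (if q < p then (1 - 1 / (q : ℝ)) ^ 2 else if q = p then 4 / (q : ℝ) else (1 + 2 / (q : ℝ)) ^ 2)) =
      (if q < p then (1 - 1 / (q : ℝ) + 1 / (q : ℝ) ^ 2) else 1) *
      (if q = p then 12 / (q : ℝ) else 1) *
      (if p < q then (1 + 12 / (q : ℝ) + 4 / (q : ℝ) ^ 2) else 1) := by
    intro q _
    rcases lt_trichotomy q p with h | h | h
    · have h1 : ¬ p < q := by omega
      have h2 : q ≠ p := by omega
      simp only [h, h1, h2, if_true, if_false]; ring
    · subst h
      simp only [lt_irrefl, if_true, if_false]; ring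
    · have h1 : ¬ q < p := by omega
      have h2 : q ≠ p := by omega
      simp only [h, h1, h2, if_true, if_false]; ring
  rw [prod_congr rfl e, prod_mul_distrib, prod_mul_distrib, prod_ite_eq' P p, if_pos hp,
    ← prod_filter, ← prod_filter]

lemma cs_step {z E : ℝ} (o : Bool) (hz : 2 ≤ z) (hE : z ^ 30 ≤ E) (S : Finset ℕ)
    (hS : S ⊆ (⌈z⌉₊).primesBelow) :
    ((∏ q ∈ S, q : ℕ) : ℝ) * (∑ p ∈ (⌈z⌉₊).primesBelow, tt E o (⌈z⌉₊).primesBelow S p) ^ 2 ≤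
      5 * ∑ p ∈ (⌈z⌉₊).primesBelow,
        4 * (Real.log p / Real.log z) ^ 39 * kk (⌈z⌉₊).primesBelow p S := by
  have h4 := sum_u_div_le hz
  set P := (⌈z⌉₊).primesBelow with hPdef
  have hP : ∀ q ∈ P, 2 ≤ q ∧ (q : ℝ) < z := by
    intro q hq
    exact ⟨(Nat.prime_of_mem_primesBelow hq).two_le, Nat.lt_ceil.1 (Nat.lt_of_mem_primesBelow hq)⟩
  have hlz : 0 < Real.log z := Real.log_pos (by linarith)
  have hu0 : ∀ p ∈ P, 0 < Real.log p / Real.log z := by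
    intro p hp
    have : 0 < Real.log p := Real.log_pos (by exact_mod_cast (hP p hp).1)
    positivity
  have hu1 : ∀ p ∈ P, Real.log p / Real.log z ≤ 1 := by
    intro p hp
    rw [div_le_one hlz]
    have := (hP p hp).1
    exact Real.log_le_log (by exact_mod_cast (by omega : 0 < p)) (hP p hp).2.le
  have hS0 : 0 < ((∏ q ∈ S, q : ℕ) : ℝ) := by
    exact_mod_cast prod_pos (fun q hq => by have := (hP q (hS hq)).1; omega)
  set D := ((∏ q ∈ S, q : ℕ) : ℝ) with hD
  have hkk0 : ∀ p, 0 ≤ kk P p S := by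
    intro p
    apply prod_nonneg
    intro q _
    split_ifs <;> positivity
  have hcs := Finset.sum_sq_le_sum_mul_sum_of_sq_le_mul P (r := fun p => tt E o P S p)
    (f := fun p => (Real.log p / Real.log z) *
      ((1 / 2 : ℝ) ^ (up S p).card * (1 / (p : ℝ) + if p ∈ S then 1 else 0)))
    (g := fun p => 4 * (Real.log p / Real.log z) ^ 39 * kk P p S / D)
    (by
      intro p hp
      have := hu0 p hp
      apply mul_nonneg this.le
      apply mul_nonneg (by positivity)
      split_ifs <;> positivity)
    (by
      intro p hp
      have := hu0 p hp
      have := hkk0 p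
      positivity)
    (by
      intro p hp
      have hu := hu0 p hp
      have h1 := tt_bound o (by linarith) hE P S hS hP p
      have h2 := gg_le P S hS (fun q hq => (hP q hq).1) p hp
      rw [← hD] at h2
      set G := ∏ q ∈ P, (if q < p then (if q ∈ S then 1 / (q : ℝ) else 1 - 1 / (q : ℝ)) else
        (2 / (q : ℝ) + if q ∈ S ∨ q = p then 0 else 1))
      set W := ((1 / 2 : ℝ) ^ (up S p).card * (1 / (p : ℝ) + if p ∈ S then 1 else 0))
      set u := Real.log p / Real.log z
      have h3 : (tt E o P S p) ^ 2 ≤ (2 * u ^ 20 * G) ^ 2 := by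
        rw [← sq_abs]
        exact pow_le_pow_left₀ (abs_nonneg _) h1 2
      refine h3.trans ?_
      have e : u * W * (4 * u ^ 39 * kk P p S / D) = 4 * u ^ 40 * (W * kk P p S) / D := by ring
      rw [e, le_div_iff₀ hS0]
      calc (2 * u ^ 20 * G) ^ 2 * D = 4 * u ^ 40 * (D * G ^ 2) := by ring
        _ ≤ _ := mul_le_mul_of_nonneg_left h2 (by positivity))
  have hw : ∑ p ∈ P, (Real.log p / Real.log z) *
      ((1 / 2 : ℝ) ^ (up S p).card * (1 / (p : ℝ) + if p ∈ S then 1 else 0)) ≤ 5 := by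
    calc _ ≤ ∑ p ∈ P, ((Real.log p / Real.log z) / p +
          (if p ∈ S then (1 / 2 : ℝ) ^ (up S p).card else 0)) := by
          apply sum_le_sum
          intro p hp
          have a := hu0 p hp
          have b := hu1 p hp
          set u := Real.log p / Real.log z
          have c : (0 : ℝ) ≤ (1 / 2 : ℝ) ^ (up S p).card := by positivity
          have d : (1 / 2 : ℝ) ^ (up S p).card ≤ 1 := pow_le_one₀ (by norm_num) (by norm_num)
          set v := (1 / 2 : ℝ) ^ (up S p).card
          have f : 0 ≤ u / p := by positivity
          split_ifs
          · have : u * (v * (1 / (p : ℝ) + 1)) = v * (u / p) + u * v := by ring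
            rw [this]
            nlinarith
          · have : u * (v * (1 / (p : ℝ) + 0)) = v * (u / p) := by ring
            rw [this]
            nlinarith
      _ = ∑ p ∈ P, (Real.log p / Real.log z) / p + ∑ p ∈ S, (1 / 2 : ℝ) ^ (up S p).card := by
          rw [sum_add_distrib, ← sum_filter, filter_mem_eq_inter, inter_eq_right.2 hS]
      _ ≤ 4 + 1 := by
          rw [sum_half_pow_up]
          have : (0 : ℝ) ≤ (1 / 2) ^ S.card := by positivity
          linarith
      _ = 5 := by norm_num
  have hg0 : 0 ≤ ∑ p ∈ P, 4 * (Real.log p / Real.log z) ^ 39 * kk P p S := by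
    apply sum_nonneg
    intro p hp
    have := hu0 p hp
    have := hkk0 p
    positivity
  rw [← sum_div] at hcs
  rw [← mul_div_assoc, le_div_iff₀ hS0] at hcs
  calc _ = (∑ p ∈ P, tt E o P S p) ^ 2 * D := by ring
    _ ≤ _ := hcs
    _ ≤ _ := mul_le_mul_of_nonneg_right hw hg0

lemma finset_bound : ∃ C : ℝ, 0 < C ∧ ∀ z E : ℝ, 2 < z → z ^ 30 ≤ E → ∀ o : Bool,
    ∑ S ∈ ((⌈z⌉₊).primesBelow).powerset,
      ((∏ q ∈ S, q : ℕ) : ℝ) * (yy E o (⌈z⌉₊).primesBelow S) ^ 2 ≤ C / Real.log z := by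
  obtain ⟨C1, hC1, h1⟩ := prod_lo_le
  obtain ⟨C2, hC2, h2⟩ := prod_hi_le
  refine ⟨2 * C1 + 2 * (5 * (4 * C1 * 12 * C2 * 4) + 1 * C1), by positivity, ?_⟩
  intro z E hz hE o
  have hI3 := sum_u_div_le hz.le
  have hlz : 0 < Real.log z := Real.log_pos (by linarith)
  have hN : 2 ≤ ⌈z⌉₊ := by
    have : 2 < ⌈z⌉₊ := Nat.lt_ceil.2 (by exact_mod_cast hz)
    omega
  have hlo := h1 ⌈z⌉₊ hN
  have hhi := h2 z hz.le
  have hcs := fun S hS => cs_step o hz.le hE S hS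
  set P := (⌈z⌉₊).primesBelow with hPdef
  have hP : ∀ q ∈ P, 2 ≤ q ∧ (q : ℝ) < z := by
    intro q hq
    exact ⟨(Nat.prime_of_mem_primesBelow hq).two_le, Nat.lt_ceil.1 (Nat.lt_of_mem_primesBelow hq)⟩
  -- main term
  have hmain : ∑ S ∈ P.powerset, ((∏ q ∈ S, q : ℕ) : ℝ) *
      (∏ q ∈ P, (-1 / (q : ℝ) + if q ∈ S then 0 else 1)) ^ 2 ≤ C1 / Real.log z := by
    have e : ∑ S ∈ P.powerset, ((∏ q ∈ S, q : ℕ) : ℝ) *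
      (∏ q ∈ P, (-1 / (q : ℝ) + if q ∈ S then 0 else 1)) ^ 2 =
        ∏ q ∈ P, (1 / (q : ℝ) + (1 - 1 / (q : ℝ)) ^ 2) := by
      rw [← sum_pw]
      apply sum_congr rfl
      intro S hS
      rw [mem_powerset] at hS
      have e1 : ((∏ q ∈ S, q : ℕ) : ℝ) = ∏ q ∈ P, (if q ∈ S then (q : ℝ) else 1) := by
        rw [prod_ite, prod_const_one, mul_one, filter_mem_eq_inter, inter_eq_right.2 hS,
          Nat.cast_prod]
      rw [e1, ← prod_pow, ← prod_mul_distrib]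
      apply prod_congr rfl
      intro q hq
      have hq0 : (0 : ℝ) < q := by have := (hP q hq).1; exact_mod_cast (by omega : 0 < q)
      split_ifs
      · field_simp; norm_num
      · ring
    rw [e]
    calc _ = ∏ q ∈ P, (1 - 1 / (q : ℝ) + 1 / (q : ℝ) ^ 2) :=
          prod_congr rfl (fun q _ => by ring)
      _ ≤ _ := hlo
      _ ≤ _ := by
          apply div_le_div_of_nonneg_left hC1.le hlz
          exact Real.log_le_log (by linarith) (Nat.le_ceil z)
  -- tail
  have htail : ∑ S ∈ P.powerset, ((∏ q ∈ S, q : ℕ) : ℝ) *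
      (∑ p ∈ P, tt E o P S p) ^ 2 ≤ 5 * (4 * C1 * 12 * C2 * 4) / Real.log z := by
    calc _ ≤ ∑ S ∈ P.powerset, 5 * ∑ p ∈ P, 4 * (Real.log p / Real.log z) ^ 39 * kk P p S :=
          sum_le_sum (fun S hS => hcs S (mem_powerset.1 hS))
      _ = 5 * ∑ p ∈ P, 4 * (Real.log p / Real.log z) ^ 39 * ∑ S ∈ P.powerset, kk P p S := by
          rw [← mul_sum, sum_comm]
          congr 1
          exact sum_congr rfl (fun p _ => by rw [mul_sum])
      _ ≤ 5 * ∑ p ∈ P, (4 * C1 * 12 * C2 / Real.log z) * ((Real.log p / Real.log z) / p) := by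
          apply mul_le_mul_of_nonneg_left _ (by norm_num)
          apply sum_le_sum
          intro p hp
          obtain ⟨hp2, hpz⟩ := hP p hp
          have hp0 : (0 : ℝ) < p := by exact_mod_cast (by omega : 0 < p)
          have hlp : 0 < Real.log p := Real.log_pos (by exact_mod_cast hp2)
          have hu0 : 0 < Real.log p / Real.log z := by positivity
          have hu1 : Real.log p / Real.log z ≤ 1 := by
            rw [div_le_one hlz]
            exact Real.log_le_log hp0 hpz.le
          rw [sum_kk P p hp]
          have a := h1 p hp2
          have ea : P.filter (fun q => q < p) = p.primesBelow := by
            ext q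
            simp only [hPdef, mem_filter, Nat.mem_primesBelow]
            have : p < ⌈z⌉₊ := Nat.lt_ceil.2 hpz
            constructor
            · rintro ⟨⟨_, b⟩, c⟩; exact ⟨c, b⟩
            · rintro ⟨c, b⟩; exact ⟨⟨by omega, b⟩, c⟩
          rw [← ea] at a
          have b := hhi p hp2 hpz
          have elp : Real.log p = Real.log p / Real.log z * Real.log z := by field_simp
          set u := Real.log p / Real.log z with hu
          rw [elp] at a
          set A := ∏ q ∈ P.filter (fun q => q < p), (1 - 1 / (q : ℝ) + 1 / (q : ℝ) ^ 2)
          set B := ∏ q ∈ P.filter (fun q => p < q), (1 + 12 / (q : ℝ) + 4 / (q : ℝ) ^ 2) with hB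
          have hB0 : 0 ≤ B := prod_nonneg (fun q _ => by positivity)
          have hAB : A * B ≤ (C1 / (u * Real.log z)) * (C2 / u ^ 36) :=
            mul_le_mul a b hB0 (by positivity)
          calc 4 * u ^ 39 * (A * (12 / p) * B) = (4 * u ^ 39 * (12 / p)) * (A * B) := by ring
            _ ≤ (4 * u ^ 39 * (12 / p)) * ((C1 / (u * Real.log z)) * (C2 / u ^ 36)) :=
                mul_le_mul_of_nonneg_left hAB (by positivity)
            _ = (4 * C1 * 12 * C2 / Real.log z) * (u / p) * u := by
                field_simp
            _ ≤ _ := mul_le_of_le_one_right (by positivity) hu1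
      _ = 5 * (4 * C1 * 12 * C2 / Real.log z) * ∑ p ∈ P, (Real.log p / Real.log z) / p := by
          rw [← mul_sum]; ring
      _ ≤ 5 * (4 * C1 * 12 * C2 / Real.log z) * 4 :=
          mul_le_mul_of_nonneg_left hI3 (by positivity)
      _ = _ := by ring
  calc _ ≤ ∑ S ∈ P.powerset, (2 * (((∏ q ∈ S, q : ℕ) : ℝ) *
        (∏ q ∈ P, (-1 / (q : ℝ) + if q ∈ S then 0 else 1)) ^ 2) +
        2 * (((∏ q ∈ S, q : ℕ) : ℝ) * (∑ p ∈ P, tt E o P S p) ^ 2)) := by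
        apply sum_le_sum
        intro S hS
        rw [yy_eq E o P S (mem_powerset.1 hS)]
        have : (0 : ℝ) ≤ ((∏ q ∈ S, q : ℕ) : ℝ) := Nat.cast_nonneg _
        generalize ((∏ q ∈ S, q : ℕ) : ℝ) = D at *
        generalize (∏ q ∈ P, (-1 / (q : ℝ) + if q ∈ S then (0 : ℝ) else 1)) = a
        generalize (∑ p ∈ P, tt E o P S p) = b
        have : 0 ≤ D * (a + b) ^ 2 := by positivity
        nlinarith
    _ ≤ 2 * (C1 / Real.log z) + 2 * (5 * (4 * C1 * 12 * C2 * 4) / Real.log z) := by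
        rw [sum_add_distrib, ← mul_sum, ← mul_sum]
        linarith
    _ ≤ _ := by
        have : 0 ≤ C1 / Real.log z := by positivity
        have e : (2 * C1 + 2 * (5 * (4 * C1 * 12 * C2 * 4) + 1 * C1)) / Real.log z =
          2 * (C1 / Real.log z) + 2 * (5 * (4 * C1 * 12 * C2 * 4) / Real.log z) +
            2 * (C1 / Real.log z) := by ring
        rw [e]
        linarith


lemma up_toFinset (L : List ℕ) (hL : L.Pairwise (· > ·)) (i : ℕ) (hi : i < L.length) :
    up L.toFinset L[i] = (L.take (i + 1)).toFinset := by
  rw [List.pairwise_iff_getElem] at hL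
  ext r
  simp only [up, mem_filter, List.mem_toFinset]
  constructor
  · rintro ⟨h1, h2⟩
    obtain ⟨j, hj, rfl⟩ := List.mem_iff_getElem.1 h1
    have hji : j ≤ i := by
      by_contra h
      have := hL i j hi hj (by omega)
      omega
    rw [List.mem_take_iff_getElem]
    exact ⟨j, by omega, rfl⟩
  · intro h
    rw [List.mem_take_iff_getElem] at h
    obtain ⟨j, hj, rfl⟩ := h
    refine ⟨List.getElem_mem _, ?_⟩
    rcases Nat.lt_or_ge j i with h | h
    · exact (hL j i _ hi h).le
    · have : j = i := by omega
      subst this; exact le_rfl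

lemma good_iff (E : ℝ) (o : Bool) (L : List ℕ) (hL : L.Pairwise (· > ·)) :
    (∀ m : ℕ, 1 ≤ m → m ≤ L.length → (if o then Odd m else Even m) →
        (((L.take m).prod : ℕ) : ℝ) * ((L.getD (m - 1) 1 : ℕ) : ℝ) ^ 30 < E) ↔
      ∀ q ∈ L.toFinset, cnd E o L.toFinset q := by
  have hnd : L.Nodup := hL.imp (fun h => ne_of_gt h)
  have key : ∀ i (hi : i < L.length), cnd E o L.toFinset L[i] ↔
      ((if o then Odd (i + 1) else Even (i + 1)) →
        (((L.take (i + 1)).prod : ℕ) : ℝ) * ((L.getD i 1 : ℕ) : ℝ) ^ 30 < E) := by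
    intro i hi
    have hnd' : (L.take (i + 1)).Nodup := hnd.sublist (List.take_sublist _ _)
    unfold cnd par
    rw [up_toFinset L hL i hi, List.toFinset_card_of_nodup hnd', List.length_take,
      Nat.min_eq_left (by omega), List.getD_eq_getElem _ _ hi]
    rw [List.prod_toFinset (fun x => x) hnd', List.map_id']
  constructor
  · intro h q hq
    obtain ⟨i, hi, rfl⟩ := List.mem_iff_getElem.1 (List.mem_toFinset.1 hq)
    rw [key i hi]
    exact h (i + 1) (by omega) (by omega)
  · intro h m hm hm'
    obtain ⟨i, rfl⟩ : ∃ i, m = i + 1 := ⟨m - 1, by omega⟩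
    have hi : i < L.length := by omega
    exact (key i hi).1 (h _ (List.mem_toFinset.2 (List.getElem_mem hi)))

lemma squarefree_prod_primes (M : Finset ℕ) (hM : ∀ q ∈ M, q.Prime) : Squarefree (∏ q ∈ M, q) := by
  apply Finset.squarefree_prod_of_pairwise_isCoprime
  · intro a ha b hb hab
    exact Nat.coprime_iff_isRelPrime.1 ((Nat.coprime_primes (hM a ha) (hM b hb)).2 hab) 
  · intro i hi
    exact (hM i hi).squarefree

lemma sieveWeight_eq {z E : ℝ} (o : Bool) (M : Finset ℕ) (hM : M ⊆ (⌈z⌉₊).primesBelow) :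
    sieveWeight 0 z E 30 o (∏ q ∈ M, q) / ((∏ q ∈ M, q : ℕ) : ℝ) =
      (if (∀ q ∈ M, cnd E o M q) then (1 : ℝ) else 0) * ∏ q ∈ M, (-1 / (q : ℝ)) := by
  have hpr : ∀ q ∈ M, q.Prime := fun q hq => Nat.prime_of_mem_primesBelow (hM hq)
  have hlt : ∀ q ∈ M, (q : ℝ) < z := fun q hq => Nat.lt_ceil.1 (Nat.lt_of_mem_primesBelow (hM hq))
  have hsq := squarefree_prod_primes M hpr
  have hpf := Nat.primeFactors_prod hpr
  unfold sieveWeight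
  set m := ∏ q ∈ M, q with hm
  have hL : m.primeFactorsList.reverse.Pairwise (· > ·) := by
    rw [List.pairwise_reverse]
    have h1 := Nat.primeFactorsList_sorted m
    have h2 := (Nat.squarefree_iff_nodup_primeFactorsList hsq.ne_zero).1 hsq
    have h3 := List.Pairwise.and (List.sortedLE_iff_pairwise.1 h1) h2
    exact h3.imp (fun h => lt_of_le_of_ne h.1 h.2)
  have hLM : m.primeFactorsList.reverse.toFinset = M := by
    rw [List.toFinset_reverse]; exact hpf
  have hg := good_iff E o _ hL
  rw [hLM, List.length_reverse] at hg
  have hcond : (Squarefree m ∧ (∀ p ∈ m.primeFactors, (0 : ℝ) ≤ (p : ℝ) ∧ (p : ℝ) < z) ∧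
      (∀ n : ℕ, 1 ≤ n → n ≤ m.primeFactorsList.length →
        (if o then Odd n else Even n) →
        (((m.primeFactorsList.reverse.take n).prod : ℕ) : ℝ) *
          ((m.primeFactorsList.reverse.getD (n - 1) 1 : ℕ) : ℝ) ^ 30 < E)) ↔
      ∀ q ∈ M, cnd E o M q := by
    rw [← hg]
    constructor
    · rintro ⟨_, _, h⟩; exact h
    · intro h
      refine ⟨hsq, ?_, h⟩
      rw [hpf]
      exact fun q hq => ⟨Nat.cast_nonneg q, hlt q hq⟩
  simp only [hcond]
  have hmu : ((ArithmeticFunction.moebius m : ℤ) : ℝ) = (-1) ^ M.card := by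
    rw [ArithmeticFunction.moebius_apply_of_squarefree hsq]
    push_cast
    congr 1
    rw [ArithmeticFunction.cardFactors_apply, ← List.length_reverse,
      ← List.toFinset_card_of_nodup (hL.imp (fun h => ne_of_gt h)), hLM]
  split_ifs
  · rw [hmu, one_mul, prod_div_distrib, prod_const, hm, Nat.cast_prod]
  · simp

lemma tsum_eq_powerset (z : ℝ) (F : ℕ → ℝ) :
    (∑' d : ℕ, if dividesPrimorial z d then F d else 0) =
      ∑ S ∈ ((⌈z⌉₊).primesBelow).powerset, F (∏ q ∈ S, q) := by
  have hpr : ∀ S ∈ ((⌈z⌉₊).primesBelow).powerset, ∀ q ∈ S, q.Prime :=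
    fun S hS q hq => Nat.prime_of_mem_primesBelow ((mem_powerset.1 hS) hq)
  have hdp : ∀ S ∈ ((⌈z⌉₊).primesBelow).powerset, dividesPrimorial z (∏ q ∈ S, q) := by
    intro S hS
    refine ⟨squarefree_prod_primes S (hpr S hS), ?_⟩
    rw [Nat.primeFactors_prod (hpr S hS)]
    exact fun q hq => Nat.lt_ceil.1 (Nat.lt_of_mem_primesBelow ((mem_powerset.1 hS) hq))
  rw [tsum_eq_sum (s := ((⌈z⌉₊).primesBelow).powerset.image (fun S => ∏ q ∈ S, q))]
  · rw [sum_image]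
    · apply sum_congr rfl
      intro S hS
      rw [if_pos (hdp S hS)]
    · intro S hS T hT h
      have h1 := Nat.primeFactors_prod (hpr S hS)
      have h2 := Nat.primeFactors_prod (hpr T hT)
      have h' : ∏ q ∈ S, q = ∏ q ∈ T, q := h
      rw [← h1, ← h2, h']
  · intro d hd
    rw [if_neg]
    rintro ⟨h1, h2⟩
    apply hd
    rw [mem_image]
    refine ⟨d.primeFactors, ?_, Nat.prod_primeFactors_of_squarefree h1⟩
    rw [mem_powerset]
    intro q hq
    exact Nat.mem_primesBelow.2 ⟨Nat.lt_ceil.2 (h2 q hq), Nat.prime_of_mem_primeFactors hq⟩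

lemma whole_eq (z E : ℝ) (o : Bool) :
    (∑' d : ℕ, if dividesPrimorial z d then
          (d : ℝ) * (∑' m : ℕ, if dividesPrimorial z m ∧ d ∣ m then
              sieveWeight 0 z E 30 o m / m else 0) ^ 2
        else 0) = ∑ S ∈ ((⌈z⌉₊).primesBelow).powerset,
      ((∏ q ∈ S, q : ℕ) : ℝ) * (yy E o (⌈z⌉₊).primesBelow S) ^ 2 := by
  rw [tsum_eq_powerset]
  apply sum_congr rfl
  intro S hS
  have hprS : ∀ q ∈ S, q.Prime :=
    fun q hq => Nat.prime_of_mem_primesBelow ((mem_powerset.1 hS) hq)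
  congr 2
  have e : ∀ m : ℕ, (if dividesPrimorial z m ∧ (∏ q ∈ S, q) ∣ m then
      sieveWeight 0 z E 30 o m / m else 0) = if dividesPrimorial z m then
      (if (∏ q ∈ S, q) ∣ m then sieveWeight 0 z E 30 o m / m else 0) else 0 := by
    intro m
    rw [ite_and]
  rw [tsum_congr e, tsum_eq_powerset]
  unfold yy
  apply sum_congr rfl
  intro M hM
  have hprM : ∀ q ∈ M, q.Prime :=
    fun q hq => Nat.prime_of_mem_primesBelow ((mem_powerset.1 hM) hq)
  have hdvd : (∏ q ∈ S, q) ∣ (∏ q ∈ M, q) ↔ S ⊆ M := by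
    constructor
    · intro h
      have := Nat.primeFactors_mono h (squarefree_prod_primes M hprM).ne_zero
      rwa [Nat.primeFactors_prod hprS, Nat.primeFactors_prod hprM] at this
    · intro h
      exact prod_dvd_prod_of_subset _ _ _ h
  rw [sieveWeight_eq o M (mem_powerset.1 hM)]
  by_cases h : S ⊆ M
  · rw [if_pos (hdvd.2 h), if_pos h]
  · rw [if_neg (fun h1 => h (hdvd.1 h1)), if_neg h, mul_zero]

lemma whole_small (z E : ℝ) (o : Bool) (hz : z ≤ 2) :
    ∑ S ∈ ((⌈z⌉₊).primesBelow).powerset,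
      ((∏ q ∈ S, q : ℕ) : ℝ) * (yy E o (⌈z⌉₊).primesBelow S) ^ 2 = 1 := by
  have : (⌈z⌉₊).primesBelow = ∅ := by
    apply eq_empty_of_forall_notMem
    intro q hq
    have h1 : (q : ℝ) < z := Nat.lt_ceil.1 (Nat.lt_of_mem_primesBelow hq)
    have h2 : (2 : ℝ) ≤ q := by exact_mod_cast (Nat.prime_of_mem_primesBelow hq).two_le
    linarith
  rw [this]
  simp [yy]


end BetaSieveMS

/-- Mean square bound for the β-sieve weights `ρ^±` (with `β = 30`, sifting range `< w`,
level `E = X^{1/1000}`, `w = X^δ` for fixed `δ ∈ (0, 1/30000]`):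
`Σ_{d ∣ P(w)} d·(Σ_{m ∣ P(w), d ∣ m} ρ_m^±/m)² ≤ C(δ)/log X` for both choices of sign. -/
theorem beta_sieve_weights_mean_square (δ : ℝ) (hδ : 0 < δ) (hδ' : δ ≤ 1 / 30000) :
    ∃ C : ℝ, 0 < C ∧ ∀ X : ℝ, 2 ≤ X → ∀ useOdd : Bool,
      (∑' d : ℕ, if dividesPrimorial (X ^ δ) d then
          (d : ℝ) * (∑' m : ℕ, if dividesPrimorial (X ^ δ) m ∧ d ∣ m then
              sieveWeight 0 (X ^ δ) (X ^ ((1 : ℝ) / 1000)) 30 useOdd m / m else 0) ^ 2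
        else 0) ≤ C / Real.log X := by

  obtain ⟨C, hC, h⟩ := BetaSieveMS.finset_bound
  refine ⟨C / δ + Real.log 2 / δ, by
    have := Real.log_pos (by norm_num : (1 : ℝ) < 2)
    positivity, ?_⟩
  intro X hX o
  have hX0 : 0 < X := by linarith
  have hlX : 0 < Real.log X := Real.log_pos (by linarith)
  have hlog : Real.log (X ^ δ) = δ * Real.log X := Real.log_rpow hX0 δ
  have hl2 : 0 < Real.log 2 := Real.log_pos (by norm_num)
  rw [BetaSieveMS.whole_eq]
  rcases le_or_gt (X ^ δ) 2 with h2 | h2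
  · rw [BetaSieveMS.whole_small _ _ _ h2, le_div_iff₀ hlX, one_mul]
    have h3 := Real.log_le_log (Real.rpow_pos_of_pos hX0 δ) h2
    rw [hlog] at h3
    have h4 : Real.log X ≤ Real.log 2 / δ := by
      rw [le_div_iff₀ hδ]; linarith
    have : 0 < C / δ := by positivity
    linarith
  · have hE : (X ^ δ) ^ 30 ≤ X ^ ((1 : ℝ) / 1000) := by
      rw [← Real.rpow_natCast, ← Real.rpow_mul hX0.le]
      apply Real.rpow_le_rpow_of_exponent_le (by linarith)
      push_cast
      linarith
    refine (h _ _ h2 hE o).trans ?_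
    rw [hlog, ← div_div]
    apply div_le_div_of_nonneg_right _ hlX.le
    have : 0 < Real.log 2 / δ := by positivity
    linarith
end
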